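/- arXiv:0911.0996 — 4 statements merged into one kernel-verified Lean document; each statement's English description precedes it below -/
import Mathlib

section
/- There exists a universal constant C such that the following holds. For all positive integers N and M, and every permutation-invariant partial function f : [M]^N → {0,1,*} (meaning f(x_1,…,x_N) = f(τ(x_{σ(1)}),…,τ(x_{σ(N)})) for every input X ∈ [M]^N, every permutation σ of [N], and every permutation τ of [M]) whose domain contains both a 0-input and a 1-input, the bounded-error randomized query complexity satisfies R(f) ≤ C · Q(f)^9 · (2 + log(Q(f)+1))^{21}, where Q(f) is the bounded-error quantum query complexity of f. -/
/-!
The proof simulates a quantum query algorithm classically, and nonadaptively, using only the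
invariance of `f` under permutations of the positions. Let `T` be the quantum query complexity,
let `X` be an input with `f X = 1` (the other case is symmetric), and let `F` be the acceptance
probability of an optimal algorithm after three rounds of majority-of-three amplification. By the
polynomial method (`acc_mem_juntaSpan`, `amp_mem_juntaSpan`), `F` is a linear combination of functions
of at most `d = 54 * T` coordinates, with values in `[0, 1]`, and by invariance `F (X ∘ σ) ≥ 92 / 100`
for all permutations `σ` of the positions. Such a low-degree function cannot notice two changes.

* The permutation `σ` may be replaced by a uniform function `h` (`urn_step`, for `N ≥ 1600 * d ^ 4`).
  Weighting `h` by the Pólya urn process with reinforcement `c` interpolates between injective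
  functions (`c = -1`) and all functions (`c = 0`); after a normalization, the average of `F (X ∘ h)`
  is a polynomial of degree at most `d` in `c` (`exists_urn_poly`), bounded on a long interval to the
  right of `0`. By Markov's inequality it moves little between `-1` and `0`.
* The function `h` may be replaced by `g ∘ k` with `g`, `k` uniform functions through an intermediate
  set of size `r = 3200 * d ^ 4` (`smallRange_step`). The average of `F (X ∘ g ∘ k)` is a polynomial of
  degree at most `d` in `1 / r` (`exists_smallRange_poly`), bounded at the points `1 / n`, and its
  value at `0` is the average over `h`; again Markov's inequality applies (`discrete_markov`).

The mean of `F (X ∘ g ∘ k)` over `k` depends only on the `r` values `X ∘ g`. So a randomized algorithm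
that queries the `r` random positions `g` and compares this mean with `1 / 2` computes `f`
(`Rc_le_of_acc`). When `N < 1600 * d ^ 4` it suffices to query everything. Hence the randomized
complexity is `O(T ^ 4)`, and since `T ≥ 1` (an algorithm without queries cannot distinguish two
inputs) this is stronger than the bound claimed.
-/

open scoped BigOperators

/-- The oracle unitary for an input `X ∈ [M]^N`: `O_X (e_i ⊗ e_j ⊗ e_w) = e_i ⊗ e_{j+x_i} ⊗ e_w`,
with addition modulo `M`. -/
noncomputable def oracleMatrix {N M W : ℕ} (X : Fin N → Fin M) :
    Matrix (Fin N × Fin M × Fin W) (Fin N × Fin M × Fin W) ℂ :=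
  fun p q => if p.1 = q.1 ∧ p.2.2 = q.2.2 ∧ p.2.1 = q.2.1 + X q.1 then 1 else 0

/-- A quantum query algorithm over alphabet `[M]` on `N` variables, with workspace dimension
`W`: an initial unit vector, unitaries `U 0, U 1, …`, and an orthogonal projection. -/
structure QAlg (N M W : ℕ) : Type where
  init : (Fin N × Fin M × Fin W) → ℂ
  init_norm : ∑ p, Complex.normSq (init p) = 1
  U : ℕ → Matrix (Fin N × Fin M × Fin W) (Fin N × Fin M × Fin W) ℂ
  U_unitary : ∀ t, U t ∈ Matrix.unitaryGroup (Fin N × Fin M × Fin W) ℂ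
  proj : Matrix (Fin N × Fin M × Fin W) (Fin N × Fin M × Fin W) ℂ
  proj_herm : proj.IsHermitian
  proj_idem : proj * proj = proj

/-- The state after `t` queries: `ψ = U_t O_X U_{t-1} O_X ⋯ O_X U_0 ψ₀`. -/
noncomputable def QAlg.state {N M W : ℕ} (A : QAlg N M W) (X : Fin N → Fin M) :
    ℕ → (Fin N × Fin M × Fin W) → ℂ
  | 0 => (A.U 0).mulVec A.init
  | t + 1 => (A.U (t + 1)).mulVec ((oracleMatrix X).mulVec (A.state X t))

/-- The acceptance probability of a `T`-query run on input `X`: `‖Π ψ_X‖²`. -/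
noncomputable def QAlg.acc {N M W : ℕ} (A : QAlg N M W) (T : ℕ) (X : Fin N → Fin M) : ℝ :=
  ∑ p, Complex.normSq (A.proj.mulVec (A.state X T) p)

/-- `Q(A,B)`: the bounded-error quantum query complexity of distinguishing inputs in `A` from
inputs in `B`. -/
noncomputable def QDist {N M : ℕ} (A B : Set (Fin N → Fin M)) : ℕ :=
  sInf {T | ∃ W : ℕ, ∃ alg : QAlg N M W,
    (∀ X ∈ A, 2 / 3 ≤ alg.acc T X) ∧ (∀ X ∈ B, alg.acc T X ≤ 1 / 3)}

/-- A decision tree over alphabet `[M]` on `N` variables: internal nodes query an index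
`i ∈ [N]` and have `M` children; leaves are labeled with output bits. -/
inductive DTree (N M : ℕ) : Type
  | leaf : Bool → DTree N M
  | node : Fin N → (Fin M → DTree N M) → DTree N M

/-- Evaluation of a decision tree on input `X`. -/
def DTree.eval {N M : ℕ} : DTree N M → (Fin N → Fin M) → Bool
  | .leaf b, _ => b
  | .node i ch, X => (ch (X i)).eval X

/-- Depth of a decision tree: maximum number of queries on a root-to-leaf path. -/
def DTree.depth {N M : ℕ} : DTree N M → ℕ
  | .leaf _ => 0
  | .node _ ch => (Finset.univ.sup fun j => (ch j).depth) + 1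

/-- The bounded-error randomized query complexity of a partial function
`f : [M]^N → {0,1,*}` (`none` denotes `*`): the least `T` such that some distribution over
depth-`≤ T` decision trees outputs `f(X)` with probability at least `2/3` for every `X` in
the domain of `f`. -/
noncomputable def Rc {N M : ℕ} (f : (Fin N → Fin M) → Option Bool) : ℕ :=
  sInf {T | ∃ μ : PMF (DTree N M),
    (∀ t ∈ μ.support, t.depth ≤ T) ∧
    ∀ (X : Fin N → Fin M) (b : Bool), f X = some b →
      2 / 3 ≤ ∑' t : DTree N M, if t.eval X = b then μ t else 0}

/-- The bounded-error quantum query complexity of a partial function `f : [M]^N → {0,1,*}`. -/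
noncomputable def Qc {N M : ℕ} (f : (Fin N → Fin M) → Option Bool) : ℕ :=
  QDist {X | f X = some true} {X | f X = some false}

/-! ### Markov brothers' inequality and its discrete version -/

open Polynomial in
/-- Markov's bound on the derivative at the right endpoint, transported to the segment with
centre `x₀` and half-length `|v|`; for `v < 0` the point `x₀ + v` is the left endpoint. -/
theorem markov_affine {d : ℕ} {q : ℝ[X]} (hq : q.natDegree ≤ d) {x₀ v m : ℝ} (hm : 0 < m)
    (hb : ∀ t ∈ Set.Icc (-1 : ℝ) 1, |q.eval (x₀ + v * t)| ≤ m) :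
    |v * q.derivative.eval (x₀ + v)| ≤ (d : ℝ) ^ 2 * m := by
  have key : ∀ s : ℝ, |s| = 1 → s * (v * q.derivative.eval (x₀ + v)) ≤ (d : ℝ) ^ 2 * m := by
    intro s hs
    have h := Chebyshev.eval_iterate_derivative_le_of_forall_abs_le_one (n := d) (k := 1)
      (x := 1) (P := C (s / m) * q.comp (C x₀ + C v * X)) le_rfl ?_ ?_
    · simp only [Function.iterate_one, Polynomial.derivative_mul, derivative_C, zero_mul, zero_add,
        derivative_comp, eval_mul, eval_comp, eval_add, eval_C, eval_X, derivative_add,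
        derivative_X, mul_one] at h
      have h2 := Chebyshev.iterate_derivative_T_eval_one_recurrence (R := ℝ) (d : ℤ) 0
      simp at h2
      rw [h2] at h
      have : s / m * (v * eval (x₀ + v) (derivative q)) * m ≤ (d : ℝ) ^ 2 * m :=
        mul_le_mul_of_nonneg_right h hm.le
      calc _ = s / m * (v * eval (x₀ + v) (derivative q)) * m := by field_simp
        _ ≤ _ := this
    · refine degree_le_of_natDegree_le ?_
      refine (natDegree_C_mul_le _ _).trans (natDegree_comp_le.trans ?_)
      have : (C x₀ + C v * X : ℝ[X]).natDegree ≤ 1 := by compute_degree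
      nlinarith
    · intro t ht
      have := hb t ht
      simp only [eval_mul, eval_C, eval_comp, eval_add, eval_X, abs_mul, abs_div, hs,
        abs_of_pos hm]
      rw [one_div, inv_mul_le_iff₀ hm]
      simpa using this
  rw [abs_le]
  constructor
  · have := key (-1) (by simp)
    linarith
  · have := key 1 (by simp)
    linarith

open Polynomial in
/-- Markov brothers' inequality on `[a, b]`, losing a factor `2`: for each `x ∈ [a, b]` one of the
two segments joining `x` to `a` and to `b` has length at least `(b - a) / 2`, and `x` is an endpoint
of it. -/
theorem markov_interval {d : ℕ} {q : ℝ[X]} (hq : q.natDegree ≤ d) {a b m : ℝ} (hab : a < b)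
    (hm : 0 < m) (hb : ∀ x ∈ Set.Icc a b, |q.eval x| ≤ m) {x : ℝ} (hx : x ∈ Set.Icc a b) :
    |q.derivative.eval x| ≤ 4 * (d : ℝ) ^ 2 * m / (b - a) := by
  obtain ⟨h1, h2⟩ := hx
  obtain ⟨e, he, hle⟩ : ∃ e ∈ Set.Icc a b, (b - a) / 2 ≤ |x - e| := by
    rcases le_total (x - a) (b - x) with h | h
    · refine ⟨b, ⟨hab.le, le_rfl⟩, ?_⟩
      rw [abs_sub_comm, abs_of_nonneg (by linarith)]; linarith
    · refine ⟨a, ⟨le_rfl, hab.le⟩, ?_⟩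
      rw [abs_of_nonneg (by linarith)]; linarith
  have h := markov_affine hq (x₀ := (x + e) / 2) (v := (x - e) / 2) hm ?_
  · rw [show (x + e) / 2 + (x - e) / 2 = x by ring, abs_mul, abs_div, abs_two] at h
    rw [le_div_iff₀ (by linarith)]
    have := mul_le_mul_of_nonneg_right hle (abs_nonneg (q.derivative.eval x))
    linarith
  · intro t ht
    apply hb
    obtain ⟨h3, h4⟩ := ht
    obtain ⟨h5, h6⟩ := he
    constructor <;> nlinarith

open Polynomial in
/-- A polynomial of degree `d` that is bounded by `B` on an `h`-net of `[a, b]`, with `h` small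
compared with `(b - a) / d ^ 2`, is Lipschitz on `[a, b]`. Its supremum on `[a, b]` is at most
`2 * B`: by Markov's inequality, a value larger than this at a maximum of `|q|` could not fall to
`B` at the closest point of the net. -/
theorem discrete_markov {d : ℕ} {q : ℝ[X]} (hq : q.natDegree ≤ d) {a b B h : ℝ} (hab : a < b)
    (hB : 0 < B) (hgrid : ∀ x ∈ Set.Icc a b, ∃ y ∈ Set.Icc a b, |x - y| ≤ h ∧ |q.eval y| ≤ B)
    (hh : h * (4 * (d : ℝ) ^ 2) ≤ (b - a) / 2) {x y : ℝ} (hx : x ∈ Set.Icc a b)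
    (hy : y ∈ Set.Icc a b) :
    |q.eval x - q.eval y| ≤ 8 * (d : ℝ) ^ 2 * B / (b - a) * |x - y| := by
  have hlip : ∀ m : ℝ, 0 < m → (∀ x ∈ Set.Icc a b, |q.eval x| ≤ m) → ∀ x ∈ Set.Icc a b,
      ∀ y ∈ Set.Icc a b, |q.eval x - q.eval y| ≤ 4 * (d : ℝ) ^ 2 * m / (b - a) * |x - y| := by
    intro m hm hbd x hx y hy
    have := (convex_Icc a b).norm_image_sub_le_of_norm_deriv_le (f := fun x => q.eval x)
      (C := 4 * (d : ℝ) ^ 2 * m / (b - a)) (fun z _ => q.differentiableAt) (fun z hz => ?_) hy hx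
    · simpa [Real.norm_eq_abs] using this
    · rw [Polynomial.deriv, Real.norm_eq_abs]
      exact markov_interval hq hab hm hbd hz
  obtain ⟨z, hz, hmax⟩ := isCompact_Icc.exists_isMaxOn (Set.nonempty_Icc.2 hab.le)
    (f := fun x => |q.eval x|) (by fun_prop)
  have hmax' : ∀ x ∈ Set.Icc a b, |q.eval x| ≤ |q.eval z| := fun x hx => hmax hx
  have hsup : ∀ x ∈ Set.Icc a b, |q.eval x| ≤ 2 * B := by
    by_contra! hcon
    obtain ⟨w, hw, hwB⟩ := hcon
    have hzB : 2 * B < |q.eval z| := hwB.trans_le (hmax' w hw)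
    obtain ⟨y, hy, hzy, hyB⟩ := hgrid z hz
    have h1 := hlip _ (by linarith) hmax' z hz y hy
    have h2 : 4 * (d : ℝ) ^ 2 * |q.eval z| / (b - a) * |z - y| ≤ |q.eval z| / 2 := by
      rw [div_mul_eq_mul_div, div_le_iff₀ (by linarith)]
      have : (4 * (d : ℝ) ^ 2 * |z - y|) ≤ (b - a) / 2 := by
        refine le_trans ?_ hh
        rw [mul_comm h]; gcongr
      nlinarith [abs_nonneg (q.eval z)]
    have h3 := abs_sub_abs_le_abs_sub (q.eval z) (q.eval y)
    linarith
  have := hlip (2 * B) (by linarith) hsup x hx y hy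
  calc _ ≤ _ := this
    _ = _ := by ring

/-! ### Spans of juntas -/

/-- The functions on `ι → α` that are linear combinations of functions depending on at most `d`
coordinates each. They play the role of polynomials of degree at most `d`. -/
def juntaSpan (ι α : Type*) (d : ℕ) : Submodule ℝ ((ι → α) → ℝ) :=
  Submodule.span ℝ {G | ∃ S : Finset ι, S.card ≤ d ∧ DependsOn G (S : Set ι)}

theorem juntaSpan_mono {ι α : Type*} {d e : ℕ} (h : d ≤ e) : juntaSpan ι α d ≤ juntaSpan ι α e :=
  Submodule.span_mono fun _ ⟨S, hS, hG⟩ => ⟨S, hS.trans h, hG⟩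

theorem mem_juntaSpan {ι α : Type*} {d : ℕ} {G : (ι → α) → ℝ} (S : Finset ι) (hS : S.card ≤ d)
    (h : DependsOn G (S : Set ι)) : G ∈ juntaSpan ι α d :=
  Submodule.subset_span ⟨S, hS, h⟩

theorem const_mem_juntaSpan {ι α : Type*} (d : ℕ) (c : ℝ) :
    (fun _ => c : (ι → α) → ℝ) ∈ juntaSpan ι α d :=
  mem_juntaSpan ∅ (by simp) fun _ _ _ => rfl

theorem mul_mem_juntaSpan {ι α : Type*} {d e : ℕ} {F G : (ι → α) → ℝ}
    (hF : F ∈ juntaSpan ι α d) (hG : G ∈ juntaSpan ι α e) : F * G ∈ juntaSpan ι α (d + e) := by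
  classical
  have h := Submodule.mul_mem_mul hF hG
  rw [juntaSpan, juntaSpan, Submodule.span_mul_span] at h
  refine Submodule.span_mono ?_ h
  rintro _ ⟨F, ⟨S, hS, hF⟩, G, ⟨S', hS', hG⟩, rfl⟩
  refine ⟨S ∪ S', (Finset.card_union_le _ _).trans (add_le_add hS hS'), fun x y hxy => ?_⟩
  simp only [Pi.mul_apply]
  rw [hF fun i hi => hxy i (by simp at hi ⊢; exact Or.inl hi),
    hG fun i hi => hxy i (by simp at hi ⊢; exact Or.inr hi)]

/-- Substituting a query to `X` for each coordinate does not raise the degree. -/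
theorem comp_mem_juntaSpan {ι α β : Type*} {d : ℕ} {F : (ι → β) → ℝ}
    (hF : F ∈ juntaSpan ι β d) (X : α → β) : (fun h => F (X ∘ h)) ∈ juntaSpan ι α d := by
  induction hF using Submodule.span_induction with
  | mem F hF =>
    obtain ⟨S, hS, hF⟩ := hF
    exact mem_juntaSpan S hS fun x y hxy => hF fun i hi => by simp [hxy i hi]
  | zero => exact Submodule.zero_mem _
  | add F G _ _ hF hG => exact Submodule.add_mem _ hF hG
  | smul c F _ hF => exact Submodule.smul_mem _ c hF

/-! ### From random permutations to random functions -/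

/-- The number of `i ∈ S` with `h i = v`. -/
def fiberCard {ι α : Type*} [DecidableEq α] (S : Finset ι) (h : ι → α) (v : α) : ℕ :=
  (S.filter fun i => h i = v).card

/-- The Pólya urn weight `∏ v, ∏ l < m v, (1 + l * X)`, where `m v` is the number of `i ∈ S` with
`h i = v`: up to normalization, the probability that the draws of an urn with one ball of each
colour `v : α` and reinforcement `X` give `h` on `S`. At `0` it is the uniform weight on functions,
at `-1` (draws without replacement) the uniform weight on functions injective on `S`. -/
noncomputable def urnWeight {ι α : Type*} [Fintype α] [DecidableEq α] (S : Finset ι) (h : ι → α) :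
    Polynomial ℝ :=
  ∏ v, ∏ l ∈ Finset.range (fiberCard S h v), (1 + (l : Polynomial ℝ) * Polynomial.X)

theorem fiberCard_insert {ι α : Type*} [DecidableEq ι] [DecidableEq α] {S : Finset ι} {i : ι}
    (hi : i ∉ S) (h : ι → α) (v : α) :
    fiberCard (insert i S) h v = if h i = v then fiberCard S h v + 1 else fiberCard S h v := by
  unfold fiberCard
  rw [Finset.filter_insert]
  split_ifs
  · rw [Finset.card_insert_of_notMem (by simp [hi])]
  · rfl

theorem sum_fiberCard {ι α : Type*} [Fintype α] [DecidableEq α] (S : Finset ι) (h : ι → α) :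
    ∑ v, fiberCard S h v = S.card :=
  (Finset.card_eq_sum_card_fiberwise (fun _ _ => Finset.mem_univ _)).symm

theorem fiberCard_congr {ι α : Type*} [DecidableEq α] {S : Finset ι} {h h' : ι → α}
    (hh : ∀ i ∈ S, h i = h' i) :
    fiberCard S h = fiberCard S h' := by
  funext v
  unfold fiberCard
  congr 1
  exact Finset.filter_congr fun i hi => by rw [hh i hi]

theorem urnWeight_insert {ι α : Type*} [DecidableEq ι] [Fintype α] [DecidableEq α] {S : Finset ι}
    {i : ι} (hi : i ∉ S) (h : ι → α) :
    urnWeight (insert i S) h =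
      urnWeight S h * (1 + (fiberCard S h (h i) : Polynomial ℝ) * Polynomial.X) := by
  unfold urnWeight
  rw [← Finset.mul_prod_erase _ _ (Finset.mem_univ (h i)),
    ← Finset.mul_prod_erase (a := h i) (s := Finset.univ)
      (f := fun v => ∏ l ∈ Finset.range (fiberCard S h v), _) (Finset.mem_univ (h i)),
    fiberCard_insert hi, if_pos rfl, Finset.prod_range_succ]
  rw [Finset.prod_congr rfl (g := fun v => ∏ l ∈ Finset.range (fiberCard S h v),
    (1 + (l : Polynomial ℝ) * Polynomial.X))]
  · ring
  · intro v hv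
    rw [fiberCard_insert hi, if_neg (Finset.ne_of_mem_erase hv).symm]

theorem natDegree_urnWeight {ι α : Type*} [Fintype α] [DecidableEq α] (S : Finset ι) (h : ι → α) :
    (urnWeight S h).natDegree ≤ S.card := by
  rw [← sum_fiberCard S h]
  refine (Polynomial.natDegree_prod_le _ _).trans (Finset.sum_le_sum fun v _ => ?_)
  refine (Polynomial.natDegree_prod_le _ _).trans ?_
  refine (Finset.sum_le_card_nsmul _ _ 1 fun l _ => ?_).trans (by simp)
  compute_degree

/-- Resampling one coordinate of a uniform function leaves it uniform. -/
theorem sum_resample {ι α : Type*} [Fintype ι] [DecidableEq ι] [Fintype α] {E : Type*}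
    [AddCommMonoid E] (i : ι) (Ψ : (ι → α) → E) :
    ∑ h, ∑ v, Ψ (Function.update h i v) = Fintype.card α • ∑ h, Ψ h := by
  have e : Function.Involutive
      (fun p : (ι → α) × α => (Function.update p.1 i p.2, p.1 i)) := by
    rintro ⟨h, v⟩; simp
  rw [← Fintype.sum_prod_type' (f := fun h v => Ψ (Function.update h i v)),
    Fintype.sum_equiv e.toPerm (fun p : (ι → α) × α => Ψ (Function.update p.1 i p.2))
      (fun p => Ψ p.1) (fun p => rfl),
    Fintype.sum_prod_type]
  simp [Finset.sum_nsmul]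

open Polynomial in
/-- One more draw from the urn multiplies the total weight of an event about earlier draws by the
total mass `|α| + |S| * X` of the urn. On the right the coordinate `i` of `h` is
free, which accounts for the factor `|α|` on the left. -/
theorem sum_urnWeight_insert {ι α : Type*} [Fintype ι] [DecidableEq ι] [Fintype α] [DecidableEq α]
    {S : Finset ι} {i : ι} (hi : i ∉ S) {G : (ι → α) → ℝ}
    (hG : DependsOn G (S : Set ι)) :
    (Fintype.card α : ℝ[X]) * ∑ h, urnWeight (insert i S) h * C (G h) =
      ((Fintype.card α : ℝ[X]) + (S.card : ℝ[X]) * X) * ∑ h, urnWeight S h * C (G h) := by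
  rw [← nsmul_eq_mul, ← sum_resample i, Finset.mul_sum]
  refine Finset.sum_congr rfl fun h _ => ?_
  have hS : ∀ v, ∀ j ∈ S, Function.update h i v j = h j := fun v j hj =>
    Function.update_of_ne (fun hji => hi (by rwa [← hji])) _ _
  have h1 : ∀ v, urnWeight S (Function.update h i v) = urnWeight S h := fun v => by
    unfold urnWeight; rw [fiberCard_congr (hS v)]
  have h2 : ∀ v, G (Function.update h i v) = G h := fun v => hG (hS v)
  simp_rw [urnWeight_insert hi, h1, h2, Function.update_self, fiberCard_congr (hS _)]
  rw [← Finset.sum_mul, ← Finset.mul_sum, Finset.sum_add_distrib, ← Finset.sum_mul,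
    ← Nat.cast_sum, sum_fiberCard]
  simp
  ring

open Polynomial in
/-- Marginals of the urn process: a function of the draws in `S` is averaged over all draws in
`U ⊇ S` as over those in `S`, up to normalization. -/
theorem sum_urnWeight_superset {ι α : Type*} [Fintype ι] [DecidableEq ι] [Fintype α]
    [DecidableEq α] {G : (ι → α) → ℝ} (S : Finset ι) (hG : DependsOn G (S : Set ι))
    (n : ℕ) (U : Finset ι) (hSU : S ⊆ U) (hU : U.card = S.card + n) :
    (Fintype.card α : ℝ[X]) ^ n * ∑ h, urnWeight U h * C (G h) =
      (∏ l ∈ Finset.Ico S.card (S.card + n), ((Fintype.card α : ℝ[X]) + (l : ℝ[X]) * X)) *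
        ∑ h, urnWeight S h * C (G h) := by
  induction n generalizing U with
  | zero =>
    have := Finset.eq_of_subset_of_card_le hSU (by omega)
    subst this; simp
  | succ n ih =>
    obtain ⟨i, hiU, hiS⟩ : ∃ i ∈ U, i ∉ S := by
      by_contra! hcon
      have := Finset.card_le_card hcon
      omega
    have hi : i ∉ U.erase i := by simp
    have hsub : S ⊆ U.erase i := fun j hj =>
      Finset.mem_erase.2 ⟨fun h => hiS (h ▸ hj), hSU hj⟩
    have hc : (U.erase i).card = S.card + n := by
      rw [Finset.card_erase_of_mem hiU]; omega
    have h1 := sum_urnWeight_insert (α := α) hi (hG.mono (by exact_mod_cast hsub))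
    rw [Finset.insert_erase hiU] at h1
    rw [pow_succ, mul_assoc, h1, mul_left_comm, ih _ hsub hc, hc, ← add_assoc,
      Finset.prod_Ico_succ_top (by omega)]
    ring

open Polynomial in
/-- The total urn weight of a function of degree at most `d` is a polynomial of degree at most `d`
in the reinforcement parameter, times the normalization of the draws after the first `d`. -/
theorem exists_urn_poly {ι α : Type*} [Fintype ι] [DecidableEq ι] [Fintype α] [DecidableEq α]
    [Nonempty α] {d : ℕ} (hd : d ≤ Fintype.card ι) {G : (ι → α) → ℝ}
    (hG : G ∈ juntaSpan ι α d) :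
    ∃ q : ℝ[X], q.natDegree ≤ d ∧ ∑ h, urnWeight Finset.univ h * C (G h) =
      q * ∏ l ∈ Finset.Ico d (Fintype.card ι), ((Fintype.card α : ℝ[X]) + (l : ℝ[X]) * X) := by
  induction hG using Submodule.span_induction with
  | mem G hG =>
    obtain ⟨S, hS, hG⟩ := hG
    obtain ⟨S', hSS', hS'⟩ := Finset.exists_superset_card_eq hS hd
    obtain ⟨n, hn⟩ := Nat.exists_eq_add_of_le hd
    have h := sum_urnWeight_superset S' (hG.mono (by exact_mod_cast hSS')) n Finset.univ
      (Finset.subset_univ _) (by rw [Finset.card_univ, hn, hS'])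
    rw [hS', ← hn] at h
    have hne : (Fintype.card α : ℝ) ^ n ≠ 0 := by positivity
    refine ⟨C (((Fintype.card α : ℝ) ^ n)⁻¹) * ∑ h, urnWeight S' h * C (G h), ?_, ?_⟩
    · refine (natDegree_C_mul_le _ _).trans (natDegree_sum_le_of_forall_le _ _ fun h _ => ?_)
      exact (natDegree_mul_C_le _ _).trans (hS' ▸ natDegree_urnWeight S' h)
    · rw [mul_assoc, mul_comm (∑ h, _) (∏ l ∈ _, _), ← h, ← mul_assoc]
      have : (C ((Fintype.card α : ℝ) ^ n)⁻¹ * (Fintype.card α : ℝ[X]) ^ n) = 1 := by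
        rw [← C_eq_natCast, ← C_pow, ← C_mul, inv_mul_cancel₀ hne, C_1]
      rw [this, one_mul]
  | zero => exact ⟨0, by simp, by simp⟩
  | add F G _ _ hF hG =>
    obtain ⟨p, hp, hp'⟩ := hF
    obtain ⟨q, hq, hq'⟩ := hG
    refine ⟨p + q, natDegree_add_le_of_degree_le hp hq, ?_⟩
    rw [add_mul, ← hp', ← hq', ← Finset.sum_add_distrib]
    simp [mul_add]
  | smul c F _ hF =>
    obtain ⟨p, hp, hp'⟩ := hF
    refine ⟨C c * p, (natDegree_C_mul_le _ _).trans hp, ?_⟩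
    rw [mul_assoc, ← hp', Finset.mul_sum]
    refine Finset.sum_congr rfl fun h _ => ?_
    simp; ring

open Polynomial in
theorem sum_urnWeight_univ {N : ℕ} :
    ∑ h : Fin N → Fin N, urnWeight Finset.univ h =
      ∏ l ∈ Finset.range N, ((N : ℝ[X]) + (l : ℝ[X]) * X) := by
  rcases Nat.eq_zero_or_pos N with rfl | hN
  · simp [urnWeight]
  have h := sum_urnWeight_superset (ι := Fin N) (α := Fin N) (G := fun _ => 1) ∅
    (fun _ _ _ => rfl) N Finset.univ (by simp) (by simp)
  simp only [urnWeight, fiberCard, Finset.filter_empty, Finset.card_empty, Finset.range_zero,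
    Finset.prod_empty, C_1, mul_one, Fintype.card_fin, zero_add, Finset.sum_const,
    Finset.card_univ, Fintype.card_pi, Finset.prod_const, nsmul_eq_mul, Nat.cast_pow] at h
  rw [mul_comm (∏ l ∈ _, _), ← Finset.range_eq_Ico] at h
  rw [one_pow, mul_one] at h
  refine mul_left_cancel₀ (pow_ne_zero N (by exact_mod_cast hN.ne' : (N : ℝ[X]) ≠ 0)) ?_
  exact h

theorem urnWeight_nonneg {ι α : Type*} [Fintype α] [DecidableEq α] (S : Finset ι) (h : ι → α)
    {c : ℝ} (hc : 0 ≤ c) : 0 ≤ (urnWeight S h).eval c := by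
  simp only [urnWeight, Polynomial.eval_prod]
  refine Finset.prod_nonneg fun v _ => Finset.prod_nonneg fun l _ => ?_
  simp; positivity

/-- At `-1` a value taken twice contributes the factor `1 + 1 * (-1) = 0`. -/
theorem urnWeight_eval_neg_one {ι α : Type*} [Fintype ι] [Fintype α] [DecidableEq α] (h : ι → α) :
    (urnWeight Finset.univ h).eval (-1) = if Function.Injective h then 1 else 0 := by
  simp only [urnWeight, Polynomial.eval_prod]
  split_ifs with hinj
  · refine Finset.prod_eq_one fun v _ => Finset.prod_eq_one fun l hl => ?_
    have : fiberCard Finset.univ h v ≤ 1 :=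
      Finset.card_le_one.2 fun a ha b hb => hinj (by simp at ha hb; rw [ha, hb])
    have : l = 0 := by simp at hl; omega
    simp [this]
  · rw [Function.not_injective_iff] at hinj
    obtain ⟨a, b, hab, hne⟩ := hinj
    refine Finset.prod_eq_zero (Finset.mem_univ (h a)) (Finset.prod_eq_zero (i := 1) ?_ (by simp))
    rw [Finset.mem_range]
    exact Finset.one_lt_card.2 ⟨a, by simp, b, by simp [hab], hne⟩

open Polynomial in
/-- For a function of degree `d` with values in `[0, 1]`, being at least `lo` on injective functions
forces an average of at least `lo - 3 / 100` over all functions. Up to normalization, the urn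
average is a polynomial of degree at most `d` in the reinforcement parameter; it is bounded on
`[0, 800 * d ^ 2]`, so it changes little between `-1` (injective functions) and `0` (all
functions). -/
theorem urn_step {N d : ℕ} (hd : 1 ≤ d) (hN : 1600 * d ^ 4 ≤ N) {G : (Fin N → Fin N) → ℝ}
    (hG : G ∈ juntaSpan (Fin N) (Fin N) d) (hG0 : ∀ h, 0 ≤ G h) (hG1 : ∀ h, G h ≤ 1) {lo : ℝ}
    (hlo1 : lo ≤ 1) (hlo : ∀ h, Function.Injective h → lo ≤ G h) :
    lo - 3 / 100 ≤ (∑ h, G h) / (N : ℝ) ^ N := by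
  have hd4 : d ≤ d ^ 4 := Nat.le_self_pow (by norm_num) d
  have hd2 : d ^ 2 ≤ d ^ 4 := Nat.pow_le_pow_right hd (by norm_num)
  have hdN : d ≤ N := by omega
  have hNpos : 0 < N := by omega
  have : Nonempty (Fin N) := ⟨⟨0, hNpos⟩⟩
  have hdR : (1 : ℝ) ≤ d := by exact_mod_cast hd
  have hNR : (1600 : ℝ) * (d : ℝ) ^ 4 ≤ N := by exact_mod_cast hN
  have hNR0 : (0 : ℝ) < N := by exact_mod_cast hNpos
  obtain ⟨q, hq, hqG⟩ := exists_urn_poly (ι := Fin N) (α := Fin N) (by simpa using hdN) hG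
  rw [Fintype.card_fin] at hqG
  set D : ℝ → ℝ := fun c => ∏ l ∈ Finset.Ico d N, ((N : ℝ) + l * c) with hD
  set E : ℝ → ℝ := fun c => ∏ l ∈ Finset.range d, ((N : ℝ) + l * c) with hE
  have hev : ∀ c, ∑ h, (urnWeight Finset.univ h).eval c * G h = q.eval c * D c := fun c => by
    have := congrArg (eval c) hqG
    simpa [eval_finsetSum, eval_prod] using this
  have htot : ∀ c, ∑ h : Fin N → Fin N, (urnWeight Finset.univ h).eval c = E c * D c := fun c => by
    have := congrArg (eval c) (sum_urnWeight_univ (N := N))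
    rw [Finset.range_eq_Ico, ← Finset.prod_Ico_consecutive _ (Nat.zero_le d) hdN,
      ← Finset.range_eq_Ico] at this
    simpa [eval_finsetSum, eval_prod] using this
  have hDpos : ∀ c, -1 ≤ c → 0 < D c := fun c hc => Finset.prod_pos fun l hl => by
    have : (l : ℝ) < N := by exact_mod_cast (Finset.mem_Ico.1 hl).2
    nlinarith [Nat.cast_nonneg (α := ℝ) l]
  -- the rescaled polynomial
  set p : ℝ[X] := C (((N : ℝ) ^ d)⁻¹) * q with hp
  have hpd : p.natDegree ≤ d := (natDegree_C_mul_le _ _).trans hq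
  have hpe : ∀ c, p.eval c = q.eval c / (N : ℝ) ^ d := fun c => by
    simp [hp, div_eq_inv_mul]
  have hbound : ∀ c ∈ Set.Icc (0 : ℝ) (800 * (d : ℝ) ^ 2), |p.eval c| ≤ 2 := by
    rintro c ⟨hc0, hc1⟩
    have hDc := hDpos c (by linarith)
    have h0 : 0 ≤ q.eval c := by
      refine nonneg_of_mul_nonneg_left (b := D c) ?_ hDc
      rw [← hev]
      exact Finset.sum_nonneg fun h _ => mul_nonneg (urnWeight_nonneg _ _ hc0) (hG0 h)
    have h1 : q.eval c ≤ E c := by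
      refine le_of_mul_le_mul_right ?_ hDc
      rw [← hev, ← htot]
      exact Finset.sum_le_sum fun h _ =>
        mul_le_of_le_one_right (urnWeight_nonneg _ _ hc0) (hG1 h)
    have h2 : E c ≤ ((N : ℝ) + d * c) ^ d := by
      refine (Finset.prod_le_prod (fun l _ => by positivity) fun l hl => ?_ :
        _ ≤ ∏ l ∈ Finset.range d, ((N : ℝ) + d * c)).trans (by simp)
      have : (l : ℝ) ≤ d := by exact_mod_cast (Finset.mem_range.1 hl).le
      gcongr
    have h3 : ((N : ℝ) + d * c) ^ d / (N : ℝ) ^ d ≤ 2 := by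
      rw [← div_pow, add_div, div_self hNR0.ne', add_comm]
      have hx : (d : ℝ) * (d * c / N) ≤ 1 / 2 := by
        rw [mul_div_assoc', div_le_iff₀ hNR0]
        have : (d : ℝ) * (d * c) ≤ d * (d * (800 * (d : ℝ) ^ 2)) := by gcongr
        nlinarith
      calc (d * c / N + 1) ^ d ≤ (Real.exp (d * c / N)) ^ d := by
            gcongr
            exact Real.add_one_le_exp _
        _ = Real.exp (d * (d * c / N)) := (Real.exp_nat_mul _ _).symm
        _ ≤ Real.exp (1 / 2) := Real.exp_le_exp.2 hx
        _ ≤ 2 := by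
            have h5 : Real.exp (1 / 2) ^ 2 = Real.exp 1 := by rw [← Real.exp_nat_mul]; norm_num
            have := Real.exp_one_lt_d9
            nlinarith [Real.exp_pos (1 / 2)]
    rw [hpe, abs_of_nonneg (by positivity)]
    refine le_trans ?_ h3
    gcongr
    linarith
  have hclose := discrete_markov hpd (a := -1) (b := 800 * (d : ℝ) ^ 2) (B := 2) (h := 1)
    (by nlinarith) (by norm_num) ?_ (by nlinarith) (x := -1) (y := 0) ⟨le_rfl, by nlinarith⟩
    ⟨by norm_num, by positivity⟩
  swap
  · rintro x ⟨hx1, hx2⟩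
    rcases le_total 0 x with h | h
    · exact ⟨x, ⟨hx1, hx2⟩, by simp, hbound x ⟨h, hx2⟩⟩
    · exact ⟨0, ⟨by norm_num, by positivity⟩, by rw [sub_zero, abs_of_nonpos h]; linarith,
        hbound 0 ⟨le_rfl, by positivity⟩⟩
  have hclose' : |p.eval (-1) - p.eval 0| ≤ 2 / 100 := by
    refine hclose.trans ?_
    rw [div_mul_eq_mul_div, div_le_iff₀ (by nlinarith)]
    norm_num
    nlinarith
  -- value at `0`
  have hzero : p.eval 0 = (∑ h, G h) / (N : ℝ) ^ N := by
    have h := hev 0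
    have hw : ∀ h : Fin N → Fin N, (urnWeight Finset.univ h).eval 0 = 1 := fun h => by
      simp [urnWeight, eval_prod]
    simp only [hw, one_mul, hD, mul_zero, add_zero, Finset.prod_const, Nat.card_Ico] at h
    rw [h, hpe, ← Nat.sub_add_cancel hdN, pow_add, Nat.sub_add_cancel hdN]
    field_simp
  -- value at `-1`
  have hneg : lo - 1 / 100 ≤ p.eval (-1) := by
    have hDc := hDpos (-1) le_rfl
    have h1 : lo * E (-1) ≤ q.eval (-1) := by
      refine le_of_mul_le_mul_right ?_ hDc
      rw [← hev, mul_assoc, ← htot, Finset.mul_sum]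
      refine Finset.sum_le_sum fun h _ => ?_
      rw [urnWeight_eval_neg_one]
      split_ifs with hi
      · simpa using hlo h hi
      · simp
    have h2 : E (-1) ≤ (N : ℝ) ^ d := by
      refine (Finset.prod_le_prod (fun l hl => ?_) (fun l hl => ?_) :
        _ ≤ ∏ l ∈ Finset.range d, (N : ℝ)).trans (by simp)
      · have : (l : ℝ) ≤ N := by exact_mod_cast (Finset.mem_range.1 hl).le.trans hdN
        linarith
      · have := Nat.cast_nonneg (α := ℝ) l
        linarith
    have h3 : (N : ℝ) ^ d * (1 - 1 / 100) ≤ E (-1) := by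
      have hdN' : (d : ℝ) ≤ N := by exact_mod_cast hdN
      have h4 : ((N : ℝ) - d) ^ d ≤ E (-1) := by
        refine le_trans (by simp) (Finset.prod_le_prod (s := Finset.range d)
          (f := fun _ => (N : ℝ) - d) (fun l hl => by simpa using hdN) (fun l hl => ?_))
        have : (l : ℝ) ≤ d := by exact_mod_cast (Finset.mem_range.1 hl).le
        linarith
      refine le_trans ?_ h4
      have h5 : ((N : ℝ) - d) ^ d = (N : ℝ) ^ d * (1 + (-(d / N : ℝ))) ^ d := by
        rw [← mul_pow]; congr 1; field_simp; ring
      rw [h5]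
      gcongr
      have hdN1 : (d : ℝ) / N ≤ 1 := (div_le_one hNR0).2 hdN'
      refine le_trans ?_ (one_add_mul_le_pow (by linarith) d)
      have : (d : ℝ) * (d / N) ≤ 1 / 100 := by
        rw [mul_div_assoc', div_le_iff₀ hNR0]
        have : (d : ℝ) ^ 2 ≤ (d : ℝ) ^ 4 := by exact_mod_cast hd2
        nlinarith
      linarith
    rw [hpe, le_div_iff₀ (by positivity)]
    have hNd : (0 : ℝ) < (N : ℝ) ^ d := by positivity
    rcases le_total 0 lo with hl | hl
    · nlinarith
    · nlinarith
  have := (abs_le.1 hclose').2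
  rw [hzero] at this
  linarith

/-! ### From random functions to functions of small range -/

/-- Restricting a uniform function along an injection gives a uniform function. -/
theorem sum_comp_injective {A B α : Type*} [Fintype A] [Fintype B] [Fintype α] [DecidableEq A]
    [DecidableEq B] {e : A → B} (he : Function.Injective e) (Φ : (A → α) → ℝ) :
    (∑ g : B → α, Φ (g ∘ e)) * (Fintype.card α : ℝ) ^ Fintype.card A =
      (Fintype.card α : ℝ) ^ Fintype.card B * ∑ g : A → α, Φ g := by
  classical
  let E : A ⊕ {b // b ∉ Set.range e} ≃ B :=
    (Equiv.sumCongr (Equiv.ofInjective e he) (Equiv.refl _)).trans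
      (Equiv.sumCompl fun b => b ∈ Set.range e)
  let F : (B → α) ≃ (A → α) × ({b // b ∉ Set.range e} → α) :=
    (Equiv.arrowCongr E.symm (Equiv.refl α)).trans (Equiv.sumArrowEquivProdArrow _ _ _)
  have hF : ∀ g, (F g).1 = g ∘ e := fun g => by
    funext a
    simp [F, E, Equiv.sumArrowEquivProdArrow]
  have hcard : Fintype.card B = Fintype.card A + Fintype.card {b // b ∉ Set.range e} := by
    rw [← Fintype.card_sum]; exact (Fintype.card_congr E).symm
  rw [Fintype.sum_equiv F (fun g => Φ (g ∘ e)) (fun p => Φ p.1) (fun g => by rw [hF]),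
    Fintype.sum_prod_type]
  simp only [Finset.sum_const, Finset.card_univ, Fintype.card_fun, nsmul_eq_mul]
  rw [← Finset.mul_sum, hcard, pow_add]
  push_cast
  ring

/-- Functions with kernel `σ` are the injections of the quotient by `σ`. -/
def kerEquivEmbedding {A B : Type*} (σ : Setoid A) :
    {k : A → B // Setoid.ker k = σ} ≃ (Quotient σ ↪ B) where
  toFun k := ⟨Quotient.lift k.1 fun a b hab => by
      have h : Setoid.ker k.1 a b := by rw [k.2]; exact hab
      exact h, by
    rintro ⟨a⟩ ⟨b⟩ hab
    refine Quotient.sound ?_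
    have h : Setoid.ker k.1 a b := hab
    rw [k.2] at h
    exact h⟩
  invFun e := ⟨fun a => e (Quotient.mk σ a), by
    ext a b
    rw [Setoid.ker_def, e.injective.eq_iff]
    exact Quotient.eq⟩
  left_inv k := rfl
  right_inv e := by
    ext ⟨a⟩
    rfl

/-- The probability `∏ l < b, (1 - l / r)` that `b` uniform elements of `Fin r` are distinct, as an
identity valid also for `b > r`, where both sides vanish. -/
theorem descFactorial_div_pow {r : ℕ} (hr : 0 < r) (b : ℕ) :
    (r.descFactorial b : ℝ) = (r : ℝ) ^ b * ∏ l ∈ Finset.range b, (1 - (l : ℝ) * (1 / r)) := by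
  have hr' : (r : ℝ) ≠ 0 := by positivity
  induction b with
  | zero => simp
  | succ b ih =>
    rw [Nat.descFactorial_succ, Finset.prod_range_succ, pow_succ]
    push_cast
    rcases le_or_gt b r with h | h
    · rw [Nat.cast_sub h, ih]
      field_simp
    · rw [(Nat.descFactorial_eq_zero_iff_lt).2 h] at ih ⊢
      rw [Nat.cast_zero, zero_eq_mul] at ih
      rcases ih with ih | ih
      · exact absurd ih (by positivity)
      · rw [ih]; simp

open Polynomial in
/-- For uniform `g : Fin r → α` and `k : A → Fin r`, the average of `G (g ∘ k)` is a polynomial in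
`1 / r` of degree at most `|A|`, whose value at `0` is the average of `G`. Conditioned on the kernel
`σ` of `k`, the average does not depend on `r`, and `σ` with `b` classes occurs with probability
`(1 / r) ^ (|A| - b) * ∏ l < b, (1 - l / r)`; at `0` only the equality relation remains. -/
theorem exists_smallRange_poly_full {A α : Type*} [Fintype A] [DecidableEq A] [Fintype α]
    [Nonempty α] (G : (A → α) → ℝ) :
    ∃ q : ℝ[X], q.natDegree ≤ Fintype.card A ∧
      (∀ r : ℕ, 0 < r → (∑ k : A → Fin r, ∑ g : Fin r → α, G (g ∘ k)) /
        ((r : ℝ) ^ Fintype.card A * (Fintype.card α : ℝ) ^ r) = q.eval (1 / (r : ℝ))) ∧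
      q.eval 0 = (∑ h, G h) / (Fintype.card α : ℝ) ^ Fintype.card A := by
  classical
  have : Finite (Setoid A) := Finite.of_injective (fun σ : Setoid A => fun a b => σ a b)
    fun σ τ h => Setoid.ext fun a b => by simpa using congrFun (congrFun h a) b
  have : Fintype (Setoid A) := Fintype.ofFinite _
  have hα : (Fintype.card α : ℝ) ≠ 0 := by positivity
  set s := Fintype.card A with hs
  have hb : ∀ σ : Setoid A, Fintype.card (Quotient σ) ≤ s := fun σ => Fintype.card_quotient_le σ
  set Ψ : Setoid A → ℝ := fun σ => (∑ g : Quotient σ → α, G (g ∘ Quotient.mk σ)) /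
    (Fintype.card α : ℝ) ^ Fintype.card (Quotient σ) with hΨ
  refine ⟨∑ σ : Setoid A, C (Ψ σ) * (X ^ (s - Fintype.card (Quotient σ)) *
    ∏ l ∈ Finset.range (Fintype.card (Quotient σ)), (1 - (l : ℝ[X]) * X)), ?_, ?_, ?_⟩
  · refine natDegree_sum_le_of_forall_le _ _ fun σ _ => (natDegree_C_mul_le _ _).trans ?_
    refine natDegree_mul_le.trans ?_
    have h1 : (∏ l ∈ Finset.range (Fintype.card (Quotient σ)), (1 - (l : ℝ[X]) * X)).natDegree
        ≤ Fintype.card (Quotient σ) := by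
      refine (natDegree_prod_le _ _).trans ?_
      refine (Finset.sum_le_card_nsmul _ _ 1 fun l _ => ?_).trans (by simp)
      compute_degree
    rw [natDegree_X_pow]
    have := hb σ
    omega
  · intro r hr
    have hr' : (r : ℝ) ≠ 0 := by positivity
    have h1 : ∀ k : A → Fin r, ∑ g : Fin r → α, G (g ∘ k) =
        (Fintype.card α : ℝ) ^ r * Ψ (Setoid.ker k) := fun k => by
      let e := kerEquivEmbedding (B := Fin r) (Setoid.ker k) ⟨k, rfl⟩
      have h := sum_comp_injective (α := α) e.injective
        (fun g => G (g ∘ Quotient.mk (Setoid.ker k)))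
      rw [hΨ]
      simp only
      rw [mul_div_assoc', eq_div_iff (by positivity)]
      rw [Fintype.card_fin] at h
      exact h
    have h2 : ∑ k : A → Fin r, Ψ (Setoid.ker k) =
        ∑ σ : Setoid A, (r.descFactorial (Fintype.card (Quotient σ)) : ℝ) * Ψ σ := by
      rw [← Finset.sum_fiberwise Finset.univ (fun k : A → Fin r => Setoid.ker k)]
      refine Finset.sum_congr rfl fun σ _ => ?_
      rw [Finset.sum_congr rfl (g := fun _ => Ψ σ)
        (fun k hk => by rw [(Finset.mem_filter.1 hk).2]), Finset.sum_const, nsmul_eq_mul]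
      congr 2
      rw [← Fintype.card_subtype, Fintype.card_congr (kerEquivEmbedding σ),
        Fintype.card_embedding_eq, Fintype.card_fin]
    simp_rw [h1]
    rw [← Finset.mul_sum, mul_comm (_ ^ s), mul_div_mul_left _ _ (by positivity), h2,
      Finset.sum_div, eval_finsetSum]
    refine Finset.sum_congr rfl fun σ _ => ?_
    rw [descFactorial_div_pow hr]
    simp only [eval_mul, eval_C, eval_pow, eval_X, eval_prod, eval_sub, eval_one, eval_natCast]
    have : (r : ℝ) ^ s = (r : ℝ) ^ (s - Fintype.card (Quotient σ)) *
        (r : ℝ) ^ Fintype.card (Quotient σ) := by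
      rw [← pow_add, Nat.sub_add_cancel (hb σ)]
    rw [this, div_pow, one_pow]
    field_simp
  · have hbot : ∀ σ : Setoid A, σ = ⊥ → Fintype.card (Quotient σ) = s ∧
        ∑ g : Quotient σ → α, G (g ∘ Quotient.mk σ) = ∑ h, G h := fun σ hσ => by
      let e : Quotient σ ≃ A :=
        ⟨Quotient.lift id fun a b h => by
            have h' : σ a b := h
            rwa [hσ] at h',
          Quotient.mk _, by rintro ⟨a⟩; rfl, fun a => rfl⟩
      exact ⟨Fintype.card_congr e,
        Fintype.sum_equiv (Equiv.arrowCongr e (Equiv.refl α)) _ _ fun g => rfl⟩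
    rw [eval_finsetSum, Finset.sum_eq_single (⊥ : Setoid A)]
    · simp only [eval_mul, eval_C, eval_X, eval_prod, eval_sub, eval_one, eval_natCast,
        mul_zero, sub_zero, Finset.prod_const_one, mul_one, (hbot ⊥ rfl).1, Nat.sub_self, pow_zero,
        hΨ, (hbot ⊥ rfl).2]
    · intro σ _ hσ
      have hlt : Fintype.card (Quotient σ) ≠ s := fun hcard => hσ <| by
        have hbij : Function.Bijective (Quotient.mk σ) :=
          (Fintype.bijective_iff_surjective_and_card _).2 ⟨Quotient.mk_surjective, hcard.symm⟩
        refine le_antisymm (fun a b hab => hbij.1 (Quotient.sound hab)) bot_le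
      have := hb σ
      simp only [eval_mul, eval_pow, eval_X]
      rw [zero_pow (by omega)]
      simp
    · simp

open Polynomial in
/-- The same as `exists_smallRange_poly_full` with the degree bounded by that of `G`, since
marginals of uniform functions are uniform. -/
theorem exists_smallRange_poly {ι α : Type*} [Fintype ι] [DecidableEq ι] [Fintype α]
    [Nonempty α] {d : ℕ} {G : (ι → α) → ℝ} (hG : G ∈ juntaSpan ι α d) :
    ∃ q : ℝ[X], q.natDegree ≤ d ∧
      (∀ r : ℕ, 0 < r → (∑ k : ι → Fin r, ∑ g : Fin r → α, G (g ∘ k)) /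
        ((r : ℝ) ^ Fintype.card ι * (Fintype.card α : ℝ) ^ r) = q.eval (1 / (r : ℝ))) ∧
      q.eval 0 = (∑ h, G h) / (Fintype.card α : ℝ) ^ Fintype.card ι := by
  classical
  induction hG using Submodule.span_induction with
  | mem G hG =>
    obtain ⟨S, hS, hG⟩ := hG
    obtain ⟨G', rfl⟩ := dependsOn_iff_exists_comp.1 hG
    obtain ⟨q, hq, hqr, hq0⟩ := exists_smallRange_poly_full (A := (S : Set ι)) (α := α) G'
    refine ⟨q, hq.trans (by simpa using hS), fun r hr => ?_, ?_⟩
    · have hr' : (r : ℝ) ≠ 0 := by positivity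
      rw [← hqr r hr]
      have h := fun g : Fin r → α => sum_comp_injective (A := (S : Set ι)) (B := ι)
        (α := Fin r) (e := Subtype.val) Subtype.val_injective (fun k => G' (g ∘ k))
      have hcomm : ∑ k : ↥(S : Set ι) → Fin r, ∑ g : Fin r → α, G' (g ∘ k) =
          ∑ g : Fin r → α, ∑ k : ↥(S : Set ι) → Fin r, G' (g ∘ k) := Finset.sum_comm
      rw [div_eq_div_iff (by positivity) (by positivity), Finset.sum_comm, hcomm]
      rw [← mul_assoc, ← mul_assoc]
      refine congrArg (· * (Fintype.card α : ℝ) ^ r) ?_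
      rw [Finset.sum_mul, Finset.sum_mul]
      refine Finset.sum_congr rfl fun g _ => ?_
      have := h g
      rw [Fintype.card_fin] at this
      exact this.trans (mul_comm _ _)
    · rw [hq0, div_eq_div_iff (by positivity) (by positivity)]
      rw [mul_comm, ← sum_comp_injective (A := (S : Set ι)) (B := ι) Subtype.val_injective]
      rfl
  | zero => exact ⟨0, by simp, by simp, by simp⟩
  | add F G _ _ hF hG =>
    obtain ⟨p, hp, hpr, hp0⟩ := hF
    obtain ⟨q, hq, hqr, hq0⟩ := hG
    refine ⟨p + q, natDegree_add_le_of_degree_le hp hq, fun r hr => ?_, ?_⟩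
    · simp only [Pi.add_apply, Finset.sum_add_distrib, add_div, eval_add, hpr r hr, hqr r hr]
    · simp only [Pi.add_apply, Finset.sum_add_distrib, add_div, eval_add, hp0, hq0]
  | smul c F _ hF =>
    obtain ⟨p, hp, hpr, hp0⟩ := hF
    refine ⟨C c * p, (natDegree_C_mul_le _ _).trans hp, fun r hr => ?_, ?_⟩
    · simp only [Pi.smul_apply, smul_eq_mul, ← Finset.mul_sum, mul_div_assoc, eval_mul, eval_C,
        hpr r hr]
    · simp only [Pi.smul_apply, smul_eq_mul, ← Finset.mul_sum, mul_div_assoc, eval_mul, eval_C,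
        hp0]

/-- The average of `G (g ∘ k)` over uniform `g : Fin r → α` and `k : ι → Fin r` is close to the
average of `G`: both are values of one polynomial, at `1 / r` and at `0`, that is bounded at all
points `1 / n`. -/
theorem smallRange_step {ι α : Type*} [Fintype ι] [DecidableEq ι] [Fintype α]
    [Nonempty α] {d r : ℕ} (hd : 1 ≤ d) (hr : 3200 * d ^ 4 ≤ r) {G : (ι → α) → ℝ}
    (hG : G ∈ juntaSpan ι α d) (hG0 : ∀ h, 0 ≤ G h) (hG1 : ∀ h, G h ≤ 1) :
    (∑ h, G h) / (Fintype.card α : ℝ) ^ Fintype.card ι - 2 / 100 ≤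
      (∑ k : ι → Fin r, ∑ g : Fin r → α, G (g ∘ k)) /
        ((r : ℝ) ^ Fintype.card ι * (Fintype.card α : ℝ) ^ r) := by
  have hdR : (1 : ℝ) ≤ d := by exact_mod_cast hd
  have hrR : (3200 : ℝ) * (d : ℝ) ^ 4 ≤ r := by exact_mod_cast hr
  have hd24 : (d : ℝ) ^ 2 ≤ (d : ℝ) ^ 4 := pow_le_pow_right₀ hdR (by norm_num)
  have hd2 : (1 : ℝ) ≤ (d : ℝ) ^ 2 := one_le_pow₀ hdR
  have hr0 : 0 < r := by
    have : 0 < d ^ 4 := by positivity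
    omega
  have hr0' : (0 : ℝ) < r := by exact_mod_cast hr0
  obtain ⟨q, hq, hqr, hq0⟩ := exists_smallRange_poly hG
  rw [hqr r hr0, ← hq0]
  have hgrid : ∀ n : ℕ, 0 < n → |q.eval (1 / (n : ℝ))| ≤ 1 := fun n hn => by
    have hn' : (0 : ℝ) < n := by exact_mod_cast hn
    rw [← hqr n hn, abs_of_nonneg (div_nonneg (Finset.sum_nonneg fun k _ =>
      Finset.sum_nonneg fun g _ => hG0 _) (by positivity)), div_le_one (by positivity)]
    refine (Finset.sum_le_sum fun k _ => Finset.sum_le_sum fun g _ => hG1 _).trans ?_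
    simp
  -- the grid points `1/n` with `n ≥ R`
  set R : ℕ := 8 * d ^ 2 with hR
  have hRR : (R : ℝ) = 8 * (d : ℝ) ^ 2 := by rw [hR]; push_cast; ring
  have hR0 : 0 < R := by positivity
  have hR0' : (0 : ℝ) < R := by exact_mod_cast hR0
  have hclose := discrete_markov hq (a := 0) (b := 1 / (R : ℝ)) (B := 1) (h := 1 / (R : ℝ) ^ 2)
    (by positivity) one_pos ?_ ?_ (x := 0) (y := 1 / (r : ℝ)) ⟨le_rfl, by positivity⟩
    ⟨by positivity,
      one_div_le_one_div_of_le hR0' (by rw [hRR]; nlinarith)⟩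
  · rw [zero_sub, abs_neg, abs_of_pos (by positivity : (0 : ℝ) < 1 / r), sub_zero] at hclose
    have h2 : 8 * (d : ℝ) ^ 2 * 1 / (1 / (R : ℝ)) * (1 / r) ≤ 2 / 100 := by
      rw [hRR, mul_one_div, div_le_iff₀ hr0', mul_one, div_div_eq_mul_div, div_one]
      nlinarith
    have := (abs_le.1 (hclose.trans h2)).2
    linarith
  · rintro x ⟨hx0, hx1⟩
    rcases hx0.eq_or_lt with rfl | hx0
    · have hsq : (R : ℝ) ≤ ((R ^ 2 : ℕ) : ℝ) := by exact_mod_cast Nat.le_self_pow (by norm_num) R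
      refine ⟨1 / ((R ^ 2 : ℕ) : ℝ), ⟨by positivity, by gcongr⟩, ?_, hgrid _ (by positivity)⟩
      rw [zero_sub, abs_neg, abs_of_nonneg (by positivity)]
      push_cast; rfl
    · have hRx : (R : ℝ) ≤ 1 / x := by rwa [le_one_div hR0' hx0]
      set n := ⌊1 / x⌋₊ with hn
      have hRn : R ≤ n := Nat.le_floor hRx
      have hn0 : 0 < n := hR0.trans_le hRn
      have hRn' : (R : ℝ) ≤ n := by exact_mod_cast hRn
      have hn0' : (0 : ℝ) < n := by exact_mod_cast hn0
      have h1 : (n : ℝ) ≤ 1 / x := Nat.floor_le (by positivity)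
      have h2 : 1 / x < n + 1 := Nat.lt_floor_add_one _
      have h3 : x ≤ 1 / n := by rwa [le_one_div hx0 hn0']
      have h4 : 1 / ((n : ℝ) + 1) < x := by rwa [one_div_lt (by positivity) hx0]
      refine ⟨1 / n, ⟨by positivity, by gcongr⟩, ?_, hgrid n hn0⟩
      rw [abs_sub_comm, abs_of_nonneg (by linarith)]
      calc 1 / (n : ℝ) - x ≤ 1 / (n : ℝ) - 1 / ((n : ℝ) + 1) := by linarith
        _ = 1 / (n * (n + 1)) := by field_simp; ring
        _ ≤ 1 / (R : ℝ) ^ 2 := by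
            gcongr
            nlinarith
  · rw [sub_zero, hRR]
    field_simp
    nlinarith

/-! ### Acceptance probabilities of quantum query algorithms -/

/-- A complex function whose real and imaginary parts both have degree at most `d`. -/
def JuntaC {ι α : Type*} (d : ℕ) (z : (ι → α) → ℂ) : Prop :=
  (fun X => (z X).re) ∈ juntaSpan ι α d ∧ (fun X => (z X).im) ∈ juntaSpan ι α d

theorem JuntaC.mul {ι α : Type*} {d e : ℕ} {z w : (ι → α) → ℂ} (hz : JuntaC d z)
    (hw : JuntaC e w) : JuntaC (d + e) fun X => z X * w X := by
  constructor
  · simp only [Complex.mul_re]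
    exact Submodule.sub_mem _ (mul_mem_juntaSpan hz.1 hw.1) (mul_mem_juntaSpan hz.2 hw.2)
  · simp only [Complex.mul_im]
    exact Submodule.add_mem _ (mul_mem_juntaSpan hz.1 hw.2) (mul_mem_juntaSpan hz.2 hw.1)

theorem JuntaC.const {ι α : Type*} (c : ℂ) : JuntaC (ι := ι) (α := α) 0 fun _ => c :=
  ⟨const_mem_juntaSpan 0 _, const_mem_juntaSpan 0 _⟩

theorem JuntaC.sum {ι α κ : Type*} {d : ℕ} (s : Finset κ) {z : κ → (ι → α) → ℂ}
    (hz : ∀ k ∈ s, JuntaC d (z k)) : JuntaC d fun X => ∑ k ∈ s, z k X := by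
  constructor
  · have := Submodule.sum_mem _ fun k hk => (hz k hk).1
    convert this using 1
    funext X; simp
  · have := Submodule.sum_mem _ fun k hk => (hz k hk).2
    convert this using 1
    funext X; simp

theorem JuntaC.const_mulVec {ι α κ : Type*} [Fintype κ] {d : ℕ} (A : Matrix κ κ ℂ)
    {v : (ι → α) → κ → ℂ} (hv : ∀ k, JuntaC d fun X => v X k) (k : κ) :
    JuntaC d fun X => A.mulVec (v X) k := by
  simp only [Matrix.mulVec, dotProduct]
  exact JuntaC.sum _ fun j _ => by simpa using (JuntaC.const (A k j)).mul (hv j)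

theorem juntaC_oracleMatrix {N M W : ℕ} (p q : Fin N × Fin M × Fin W) :
    JuntaC 1 fun X : Fin N → Fin M => oracleMatrix X p q := by
  constructor <;>
  · refine mem_juntaSpan {q.1} (by simp) fun X Y h => ?_
    simp [oracleMatrix, h q.1 (by simp)]

theorem juntaC_state {N M W : ℕ} (A : QAlg N M W) (t : ℕ) (p : Fin N × Fin M × Fin W) :
    JuntaC t fun X => A.state X t p := by
  induction t generalizing p with
  | zero => exact JuntaC.const ((A.U 0).mulVec A.init p)
  | succ t ih =>
    refine JuntaC.const_mulVec _ (fun k => ?_) p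
    simp only [Matrix.mulVec, dotProduct]
    refine JuntaC.sum _ fun j _ => ?_
    rw [add_comm]
    exact (juntaC_oracleMatrix k j).mul (ih j)

/-- The polynomial method: amplitudes after `T` queries have degree at most `T` in the input, so the
acceptance probability has degree at most `2 * T`. -/
theorem acc_mem_juntaSpan {N M W : ℕ} (A : QAlg N M W) (T : ℕ) :
    A.acc T ∈ juntaSpan (Fin N) (Fin M) (2 * T) := by
  have h : A.acc T = ∑ p, fun X => Complex.normSq (A.proj.mulVec (A.state X T) p) := by
    funext X; simp [QAlg.acc]
  rw [h]
  refine Submodule.sum_mem _ fun p _ => ?_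
  obtain ⟨h1, h2⟩ := JuntaC.const_mulVec A.proj (juntaC_state A T) p
  simp only [Complex.normSq_apply]
  rw [two_mul]
  exact Submodule.add_mem _ (mul_mem_juntaSpan h1 h1) (mul_mem_juntaSpan h2 h2)

theorem sum_normSq_eq {κ : Type*} [Fintype κ] (v : κ → ℂ) :
    ((∑ p, Complex.normSq (v p) : ℝ) : ℂ) = star v ⬝ᵥ v := by
  simp [dotProduct, Complex.normSq_eq_conj_mul_self]

theorem sum_normSq_unitary {κ : Type*} [Fintype κ] [DecidableEq κ] {U : Matrix κ κ ℂ}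
    (hU : U ∈ Matrix.unitaryGroup κ ℂ) (v : κ → ℂ) :
    ∑ p, Complex.normSq (U.mulVec v p) = ∑ p, Complex.normSq (v p) := by
  apply Complex.ofReal_injective
  rw [sum_normSq_eq, sum_normSq_eq, Matrix.star_mulVec, Matrix.dotProduct_mulVec,
    Matrix.vecMul_vecMul, ← Matrix.star_eq_conjTranspose, (Matrix.mem_unitaryGroup_iff').1 hU,
    Matrix.vecMul_one]

theorem sum_normSq_proj_le {κ : Type*} [Fintype κ] [DecidableEq κ] {P : Matrix κ κ ℂ}
    (hP : P.IsHermitian) (hP2 : P * P = P) (v : κ → ℂ) :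
    ∑ p, Complex.normSq (P.mulVec v p) ≤ ∑ p, Complex.normSq (v p) := by
  have h1 : (∑ p, Complex.normSq (v p) : ℝ) = ∑ p, Complex.normSq (P.mulVec v p) +
      ∑ p, Complex.normSq ((1 - P).mulVec v p) := by
    apply Complex.ofReal_injective
    have hQ : (1 - P).IsHermitian := Matrix.isHermitian_one.sub hP
    rw [Complex.ofReal_add, sum_normSq_eq, sum_normSq_eq, sum_normSq_eq, Matrix.star_mulVec,
      Matrix.star_mulVec, Matrix.dotProduct_mulVec, Matrix.dotProduct_mulVec,
      Matrix.vecMul_vecMul, Matrix.vecMul_vecMul, hP.eq, hQ.eq, hP2, ← add_dotProduct,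
      ← Matrix.vecMul_add]
    have : P + (1 - P) * (1 - P) = 1 := by
      rw [sub_mul, mul_sub, mul_sub, hP2]; simp
    rw [this, Matrix.vecMul_one]
  rw [h1]
  exact le_add_of_nonneg_right (Finset.sum_nonneg fun p _ => Complex.normSq_nonneg _)

/-- The matrix permuting the standard basis by `π`. -/
def permMat {κ : Type*} [DecidableEq κ] (π : Equiv.Perm κ) : Matrix κ κ ℂ :=
  fun p q => if p = π q then 1 else 0

theorem permMat_mem_unitaryGroup {κ : Type*} [Fintype κ] [DecidableEq κ] (π : Equiv.Perm κ) :
    permMat π ∈ Matrix.unitaryGroup κ ℂ := by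
  rw [Matrix.mem_unitaryGroup_iff']
  ext p q
  simp [Matrix.mul_apply, permMat, Matrix.one_apply, Matrix.star_apply, @eq_comm _ q p]

theorem permMat_mulVec_single {κ : Type*} [Fintype κ] [DecidableEq κ] (π : Equiv.Perm κ) (b : κ) :
    (permMat π).mulVec (Pi.single b 1) = Pi.single (π b) 1 := by
  rw [Matrix.mulVec_single_one]
  ext p
  simp [permMat, Pi.single_apply]

/-- The permutation of basis states performed by the oracle. -/
def oraclePerm {N M W : ℕ} [NeZero M] (X : Fin N → Fin M) :
    Equiv.Perm (Fin N × Fin M × Fin W) where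
  toFun p := (p.1, p.2.1 + X p.1, p.2.2)
  invFun p := (p.1, p.2.1 - X p.1, p.2.2)
  left_inv p := by simp
  right_inv p := by simp

theorem oracleMatrix_eq_permMat {N M W : ℕ} [NeZero M] (X : Fin N → Fin M) :
    oracleMatrix (W := W) X = permMat (oraclePerm X) := by
  funext p q
  obtain ⟨p1, p2, p3⟩ := p
  simp only [oracleMatrix, permMat, oraclePerm, Equiv.coe_fn_mk, Prod.mk.injEq]
  congr 1
  exact propext (by tauto)

theorem sum_normSq_state {N M W : ℕ} [NeZero M] (A : QAlg N M W) (X : Fin N → Fin M) (t : ℕ) :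
    ∑ p, Complex.normSq (A.state X t p) = 1 := by
  induction t with
  | zero => rw [QAlg.state, sum_normSq_unitary (A.U_unitary 0), A.init_norm]
  | succ t ih =>
    rw [QAlg.state, sum_normSq_unitary (A.U_unitary _), oracleMatrix_eq_permMat,
      sum_normSq_unitary (permMat_mem_unitaryGroup _), ih]

theorem acc_nonneg {N M W : ℕ} (A : QAlg N M W) (T : ℕ) (X : Fin N → Fin M) : 0 ≤ A.acc T X :=
  Finset.sum_nonneg fun _ _ => Complex.normSq_nonneg _

theorem acc_le_one {N M W : ℕ} [NeZero M] (A : QAlg N M W) (T : ℕ) (X : Fin N → Fin M) :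
    A.acc T X ≤ 1 :=
  (sum_normSq_proj_le A.proj_herm A.proj_idem _).trans (sum_normSq_state A X T).le

/-! ### Finiteness of the quantum query complexity -/

/-- The basis permutation used between two queries by the algorithm that reads its whole input.
The workspace encodes, through `e`, a partial transcript `Fin N → Fin M`; the permutation swaps the
answer register with the entry of the transcript at the query register, then advances the latter. -/
def loadPerm {N M W : ℕ} (e : (Fin N → Fin M) ≃ Fin W) : Equiv.Perm (Fin N × Fin M × Fin W) where
  toFun p := (finRotate N p.1, e.symm p.2.2 p.1,
    e (Function.update (e.symm p.2.2) p.1 p.2.1))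
  invFun p := ((finRotate N).symm p.1, e.symm p.2.2 ((finRotate N).symm p.1),
    e (Function.update (e.symm p.2.2) ((finRotate N).symm p.1) p.2.1))
  left_inv p := by
    simp only [Equiv.symm_apply_apply, Function.update_self, Function.update_idem,
      Function.update_eq_self, Equiv.apply_symm_apply]
  right_inv p := by
    simp only [Equiv.symm_apply_apply, Function.update_self, Function.update_idem,
      Function.update_eq_self, Equiv.apply_symm_apply]

/-- Every partial function is computed by some quantum query algorithm, so the set whose infimum
defines `Qc` is nonempty. The algorithm makes `N` queries and is exact. -/
theorem exists_exact_qalg {N M : ℕ} (hN : 0 < N) [NeZero M] (f : (Fin N → Fin M) → Option Bool) :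
    ∃ T W : ℕ, ∃ A : QAlg N M W, (∀ X, f X = some true → 2 / 3 ≤ A.acc T X) ∧
      ∀ X, f X = some false → A.acc T X ≤ 1 / 3 := by
  classical
  let e : (Fin N → Fin M) ≃ Fin (Fintype.card (Fin N → Fin M)) := Fintype.equivFin _
  let dg : Fin N × Fin M × Fin (Fintype.card (Fin N → Fin M)) → ℂ :=
    fun p => if f (e.symm p.2.2) = some true then 1 else 0
  let A : QAlg N M (Fintype.card (Fin N → Fin M)) :=
    { init := Pi.single (⟨0, hN⟩, 0, e 0) 1
      init_norm := by
        rw [Finset.sum_eq_single (⟨0, hN⟩, 0, e 0)]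
        · simp
        · intro p _ hp; simp [Pi.single_eq_of_ne hp]
        · simp
      U := fun t => if t = 0 then 1 else permMat (loadPerm e)
      U_unitary := fun t => by
        split_ifs
        · exact Submonoid.one_mem _
        · exact permMat_mem_unitaryGroup _
      proj := Matrix.diagonal dg
      proj_herm := by
        rw [Matrix.IsHermitian, Matrix.diagonal_conjTranspose]
        congr 1
        funext p
        simp only [dg, Pi.star_apply]
        split_ifs <;> simp
      proj_idem := by
        rw [Matrix.diagonal_mul_diagonal]
        congr 1
        funext p
        simp only [dg]
        split_ifs <;> simp }
  have hst : ∀ X t, t ≤ N → ∃ i : Fin N, (t < N → i.val = t) ∧ A.state X t =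
      Pi.single (i, 0, e fun j => if j.val < t then X j else 0) 1 := by
    intro X t
    induction t with
    | zero =>
      intro _
      refine ⟨⟨0, hN⟩, fun _ => rfl, ?_⟩
      simp only [QAlg.state, A, if_true, Matrix.one_mulVec, not_lt_zero, if_false]
      rfl
    | succ t ih =>
      intro ht
      obtain ⟨i, hi, hs⟩ := ih (by omega)
      have hi := hi (by omega)
      refine ⟨finRotate N i, fun ht' => ?_, ?_⟩
      · obtain ⟨n, rfl⟩ : ∃ n, N = n + 1 := ⟨N - 1, by omega⟩
        rw [coe_finRotate_of_ne_last (by rw [Fin.ne_iff_vne, hi, Fin.val_last]; omega), hi]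
      · rw [QAlg.state, hs, oracleMatrix_eq_permMat, permMat_mulVec_single]
        simp only [A, Nat.succ_ne_zero, if_false, permMat_mulVec_single]
        congr 1
        simp only [loadPerm, oraclePerm, Equiv.coe_fn_mk, Equiv.symm_apply_apply, Prod.mk.injEq,
          true_and, zero_add]
        refine ⟨by simp [hi], ?_⟩
        congr 1
        funext j
        rcases eq_or_ne j i with rfl | hj
        · simp [hi]
        · rw [Function.update_of_ne hj]
          have : j.val ≠ t := fun h => hj (Fin.ext (h.trans hi.symm))
          have : j.val < t ↔ j.val < t + 1 := by omega
          simp [this]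
  have hacc : ∀ X, A.acc N X = if f X = some true then 1 else 0 := by
    intro X
    obtain ⟨i, -, hs⟩ := hst X N le_rfl
    simp only [Fin.is_lt, if_true] at hs
    rw [QAlg.acc, hs]
    change ∑ p, Complex.normSq ((Matrix.diagonal dg).mulVec _ p) = _
    simp only [Matrix.mulVec_diagonal]
    rw [Finset.sum_eq_single (i, 0, e X)]
    · simp only [Pi.single_eq_same, dg, Equiv.symm_apply_apply]
      split_ifs <;> simp
    · intro p _ hp; simp [Pi.single_eq_of_ne hp]
    · simp
  refine ⟨N, _, A, fun X hX => ?_, fun X hX => ?_⟩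
  · rw [hacc, if_pos hX]; norm_num
  · rw [hacc, if_neg (by simp [hX])]; norm_num

/-! ### Nonadaptive randomized algorithms -/

/-- The decision tree that queries `q 0, …, q (r - 1)` and applies `out` to the answers. -/
theorem DTree.exists_nonadaptive {N M : ℕ} {r : ℕ} (q : Fin r → Fin N)
    (out : (Fin r → Fin M) → Bool) :
    ∃ t : DTree N M, t.depth ≤ r ∧ ∀ X, t.eval X = out (X ∘ q) := by
  induction r with
  | zero => exact ⟨.leaf (out Fin.elim0), Nat.zero_le _,
    fun X => congrArg out (Subsingleton.elim _ _)⟩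
  | succ r ih =>
    choose ch hd he using fun j : Fin M => ih (Fin.tail q) fun y => out (Fin.cons j y)
    refine ⟨.node (q 0) ch, ?_, fun X => ?_⟩
    · exact Nat.succ_le_succ (Finset.sup_le fun j _ => hd j)
    · rw [DTree.eval, he]
      congr 1
      funext i
      refine Fin.cases ?_ (fun i => ?_) i <;> simp [Fin.tail]

/-- A randomized algorithm that draws `ω` uniformly, queries the positions `q ω` and applies `out`
to the answers bounds `Rc`. -/
theorem Rc_le {N M : ℕ} (f : (Fin N → Fin M) → Option Bool) {r : ℕ} {Ω : Type}
    [Fintype Ω] [Nonempty Ω] (q : Ω → Fin r → Fin N) (out : (Fin r → Fin M) → Bool)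
    (h : ∀ X b, f X = some b → (2 / 3 : ℝ) * Fintype.card Ω ≤
      (Finset.univ.filter fun ω => out (X ∘ q ω) = b).card) : Rc f ≤ r := by
  classical
  choose tr hd he using fun ω => DTree.exists_nonadaptive (q ω) out
  refine Nat.sInf_le ⟨(PMF.uniformOfFintype Ω).map tr, ?_, fun X b hb => ?_⟩
  · intro t ht
    obtain ⟨ω, -, rfl⟩ := (PMF.mem_support_map_iff _ _ _).1 ht
    exact hd ω
  · have h1 : (∑' t : DTree N M, if t.eval X = b then ((PMF.uniformOfFintype Ω).map tr) t else 0)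
        = ((PMF.uniformOfFintype Ω).map tr).toOuterMeasure {t | t.eval X = b} := by
      rw [PMF.toOuterMeasure_apply]
      refine tsum_congr fun t => ?_
      simp [Set.indicator_apply]
    rw [h1, PMF.toOuterMeasure_map_apply, PMF.toOuterMeasure_uniformOfFintype_apply]
    have h2 : Fintype.card ↑(tr ⁻¹' {t | t.eval X = b}) =
        (Finset.univ.filter fun ω => out (X ∘ q ω) = b).card := by
      rw [Fintype.card_subtype]
      simp [he]
    rw [h2, ENNReal.le_div_iff_mul_le (by simp) (by simp)]
    have h3 := h X b hb
    have h4 : (2 / 3 : ENNReal) * (Fintype.card Ω : ENNReal) =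
        ENNReal.ofReal ((2 / 3 : ℝ) * Fintype.card Ω) := by
      rw [ENNReal.ofReal_mul (by norm_num), ENNReal.ofReal_div_of_pos (by norm_num)]
      simp
    rw [h4, ENNReal.ofReal_le_iff_le_toReal (by simp)]
    simpa using h3

/-! ### Error reduction and the simulation -/

/-- The acceptance probability of the majority of three independent runs, each accepting with
probability `x`. -/
def amp (x : ℝ) : ℝ := 3 * x ^ 2 - 2 * x ^ 3

theorem amp_mem_juntaSpan {ι α : Type*} {d : ℕ} {F : (ι → α) → ℝ} (hF : F ∈ juntaSpan ι α d) :
    (fun X => amp (F X)) ∈ juntaSpan ι α (3 * d) := by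
  have h : (fun X => amp (F X)) = (3 : ℝ) • (F * F) - (2 : ℝ) • (F * F * F) := by
    funext X; simp [amp]; ring
  rw [h]
  have h2 := mul_mem_juntaSpan hF hF
  refine Submodule.sub_mem _ (Submodule.smul_mem _ _ (juntaSpan_mono (by omega) h2))
    (Submodule.smul_mem _ _ (juntaSpan_mono (by omega) (mul_mem_juntaSpan h2 hF)))

theorem amp_one_sub (x : ℝ) : amp (1 - x) = 1 - amp x := by unfold amp; ring

theorem amp_mono {x y : ℝ} (hx : 0 ≤ x) (hxy : x ≤ y) (hy : y ≤ 1) : amp x ≤ amp y := by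
  unfold amp
  nlinarith [mul_nonneg (sub_nonneg.2 hxy) (mul_nonneg hx (sub_nonneg.2 hy)),
    mul_nonneg (sub_nonneg.2 hxy) (mul_nonneg hx (sub_nonneg.2 (hxy.trans hy))),
    mul_nonneg (sub_nonneg.2 hxy) (mul_nonneg (hx.trans hxy) (sub_nonneg.2 (hxy.trans hy))),
    mul_nonneg (sub_nonneg.2 hxy) (mul_nonneg (hx.trans hxy) (sub_nonneg.2 hy))]

theorem amp_nonneg {x : ℝ} (hx : 0 ≤ x) (hx1 : x ≤ 1) : 0 ≤ amp x := by
  have := amp_mono le_rfl hx hx1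
  simpa [amp] using this

theorem amp_le_one {x : ℝ} (hx : 0 ≤ x) (hx1 : x ≤ 1) : amp x ≤ 1 := by
  have := amp_mono hx hx1 le_rfl
  norm_num [amp] at this ⊢
  exact this

theorem amp3_ge {x : ℝ} (hx : 2 / 3 ≤ x) (hx1 : x ≤ 1) : 92 / 100 ≤ amp (amp (amp x)) := by
  have h1 : 74 / 100 ≤ amp x := by
    refine le_trans ?_ (amp_mono (by norm_num) hx hx1); norm_num [amp]
  have h1' := amp_le_one (by linarith) hx1
  have h2 : 83 / 100 ≤ amp (amp x) := by
    refine le_trans ?_ (amp_mono (by norm_num) h1 h1'); norm_num [amp]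
  have h2' := amp_le_one (by linarith) h1'
  refine le_trans ?_ (amp_mono (by norm_num) h2 h2'); norm_num [amp]

/-- If `F` is large on all permutations of `X`, then for uniform `g` the average over `k` of
`F (X ∘ g ∘ k)`, which depends only on `X ∘ g`, is large on average over `g`. -/
theorem smallRange_average {N M d r : ℕ} (hd : 1 ≤ d) (hN : 1600 * d ^ 4 ≤ N)
    (hr : 3200 * d ^ 4 ≤ r) {F : (Fin N → Fin M) → ℝ} (hF : F ∈ juntaSpan (Fin N) (Fin M) d)
    (hF0 : ∀ Y, 0 ≤ F Y) (hF1 : ∀ Y, F Y ≤ 1) (X : Fin N → Fin M)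
    (hX : ∀ σ : Equiv.Perm (Fin N), 92 / 100 ≤ F (X ∘ σ)) :
    (5 / 6 : ℝ) * (N : ℝ) ^ r ≤ ∑ g : Fin r → Fin N,
      (∑ k : Fin N → Fin r, F ((X ∘ g) ∘ k)) / (r : ℝ) ^ N := by
  have hd4 : 1 ≤ d ^ 4 := Nat.one_le_pow _ _ hd
  have hNpos : 0 < N := by omega
  have : Nonempty (Fin N) := ⟨⟨0, hNpos⟩⟩
  have hG := comp_mem_juntaSpan hF X
  have h1 := urn_step hd hN hG (fun h => hF0 _) (fun h => hF1 _) (lo := 92 / 100) (by norm_num)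
    fun h hh => hX (Equiv.ofBijective h (Finite.injective_iff_bijective.1 hh))
  have h2 := smallRange_step hd hr hG (fun h => hF0 _) (fun h => hF1 _)
  simp only [Fintype.card_fin] at h2
  have hrpos : (0 : ℝ) < r := by exact_mod_cast (by omega : 0 < r)
  have hNR : (0 : ℝ) < N := by exact_mod_cast hNpos
  rw [← Finset.sum_div, Finset.sum_comm, le_div_iff₀ (by positivity)]
  have h5 : (5 / 6 : ℝ) ≤ (∑ k : Fin N → Fin r, ∑ g : Fin r → Fin N, F (X ∘ (g ∘ k))) /
    ((r : ℝ) ^ N * (N : ℝ) ^ r) := by linarith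
  rw [le_div_iff₀ (by positivity)] at h5
  calc _ = (5 / 6 : ℝ) * ((r : ℝ) ^ N * (N : ℝ) ^ r) := by ring
    _ ≤ _ := h5

/-- A quantity at most `1` and, off `P`, at most `1 / 2`, whose average is at least `5 / 6`,
forces `P` to hold with probability at least `2 / 3`. -/
theorem card_filter_ge {Ω : Type*} [Fintype Ω] (a : Ω → ℝ) (ha : ∀ ω, a ω ≤ 1)
    (P : Ω → Prop) [DecidablePred P] (hP : ∀ ω, ¬ P ω → a ω ≤ 1 / 2)
    (h : (5 / 6 : ℝ) * Fintype.card Ω ≤ ∑ ω, a ω) :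
    (2 / 3 : ℝ) * Fintype.card Ω ≤ (Finset.univ.filter P).card := by
  have h1 : ∑ ω, a ω ≤ ∑ ω, ((1 / 2 : ℝ) + 1 / 2 * if P ω then 1 else 0) :=
    Finset.sum_le_sum fun ω _ => by
      split_ifs with hω
      · linarith [ha ω]
      · linarith [hP ω hω]
  rw [Finset.sum_add_distrib, ← Finset.mul_sum, Finset.sum_boole] at h1
  simp only [Finset.sum_const, Finset.card_univ, nsmul_eq_mul] at h1
  linarith

/-- The classical simulation: sample `r = 3200 * (54 * T) ^ 4` positions `g`, query `X ∘ g`, and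
compare with `1 / 2` the mean acceptance probability of the amplified algorithm on the inputs
`(X ∘ g) ∘ k` for uniform `k`. If `N` is below `r / 2`, querying everything is cheaper. -/
theorem Rc_le_of_acc {N M T W : ℕ} [NeZero M] (hT : 1 ≤ T) (f : (Fin N → Fin M) → Option Bool)
    (hf : ∀ X (σ : Equiv.Perm (Fin N)), f X = f (X ∘ σ)) (A : QAlg N M W)
    (hA1 : ∀ X, f X = some true → 2 / 3 ≤ A.acc T X)
    (hA0 : ∀ X, f X = some false → A.acc T X ≤ 1 / 3) : Rc f ≤ 3200 * (54 * T) ^ 4 := by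
  classical
  have hd : 1 ≤ 54 * T := by omega
  have hd4 : 1 ≤ (54 * T) ^ 4 := Nat.one_le_pow _ _ hd
  rcases lt_or_ge N (1600 * (54 * T) ^ 4) with hN | hN
  · refine (Rc_le f (r := N) (Ω := Unit) (fun _ => id) (fun Y => f Y == some true)
      fun X b hb => ?_).trans (by omega)
    have : (Finset.univ.filter fun _ : Unit => (f (X ∘ id) == some true) = b) = Finset.univ := by
      refine Finset.filter_true_of_mem fun _ _ => ?_
      rw [Function.comp_id, hb]
      cases b <;> rfl
    rw [this]
    norm_num
  set F : (Fin N → Fin M) → ℝ := fun Y => amp (amp (amp (A.acc T Y))) with hFdef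
  have hF : F ∈ juntaSpan (Fin N) (Fin M) (54 * T) := by
    have := amp_mem_juntaSpan (amp_mem_juntaSpan (amp_mem_juntaSpan (acc_mem_juntaSpan A T)))
    exact juntaSpan_mono (by omega) this
  have b0 := acc_nonneg A T
  have b1 := acc_le_one A T
  have hF0 : ∀ Y, 0 ≤ F Y := fun Y =>
    amp_nonneg (amp_nonneg (amp_nonneg (b0 Y) (b1 Y)) (amp_le_one (b0 Y) (b1 Y)))
      (amp_le_one (amp_nonneg (b0 Y) (b1 Y)) (amp_le_one (b0 Y) (b1 Y)))
  have hF1 : ∀ Y, F Y ≤ 1 := fun Y =>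
    amp_le_one (amp_nonneg (amp_nonneg (b0 Y) (b1 Y)) (amp_le_one (b0 Y) (b1 Y)))
      (amp_le_one (amp_nonneg (b0 Y) (b1 Y)) (amp_le_one (b0 Y) (b1 Y)))
  have hNpos : 0 < N := by omega
  have : Nonempty (Fin N) := ⟨⟨0, hNpos⟩⟩
  set r := 3200 * (54 * T) ^ 4 with hr
  have hrpos : (0 : ℝ) < r := by exact_mod_cast (by omega : 0 < r)
  let a : (Fin r → Fin M) → ℝ := fun z => (∑ k : Fin N → Fin r, F (z ∘ k)) / (r : ℝ) ^ N
  have ha0 : ∀ z, 0 ≤ a z := fun z =>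
    div_nonneg (Finset.sum_nonneg fun k _ => hF0 _) (by positivity)
  have hsum1 : ∑ k : Fin N → Fin r, (1 : ℝ) = (r : ℝ) ^ N := by simp
  have ha1 : ∀ z, a z ≤ 1 := fun z => by
    rw [div_le_one (by positivity), ← hsum1]
    exact Finset.sum_le_sum fun k _ => hF1 _
  refine Rc_le f (Ω := Fin r → Fin N) id (fun z => decide (1 / 2 ≤ a z)) fun X b hb => ?_
  simp only [id]
  cases b with
  | true =>
    refine card_filter_ge (fun g => a (X ∘ g)) (fun g => ha1 _) _ (fun g hg => ?_) ?_
    · simp only [decide_eq_true_eq, not_le] at hg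
      exact hg.le
    · have := smallRange_average hd hN hr.ge hF hF0 hF1 X fun σ =>
        amp3_ge (hA1 _ ((hf X σ).symm.trans hb)) (b1 _)
      simpa [a] using this
  | false =>
    have hFc : (fun Y => 1 - F Y) ∈ juntaSpan (Fin N) (Fin M) (54 * T) :=
      Submodule.sub_mem _ (const_mem_juntaSpan _ 1) hF
    refine card_filter_ge (fun g => 1 - a (X ∘ g)) (fun g => by linarith [ha0 (X ∘ g)]) _
      (fun g hg => ?_) ?_
    · simp only [decide_eq_false_iff_not, not_not] at hg
      linarith
    · have := smallRange_average hd hN hr.ge hFc (fun Y => by linarith [hF1 Y])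
        (fun Y => by linarith [hF0 Y]) X fun σ => by
          have h := amp3_ge (x := 1 - A.acc T (X ∘ σ))
            (by linarith [hA0 _ ((hf X σ).symm.trans hb)]) (by linarith [b0 (X ∘ σ)])
          rwa [amp_one_sub, amp_one_sub, amp_one_sub] at h
      have h2 : ∀ g : Fin r → Fin N, 1 - a (X ∘ g) =
          (∑ k : Fin N → Fin r, (1 - F ((X ∘ g) ∘ k))) / (r : ℝ) ^ N := fun g => by
        rw [Finset.sum_sub_distrib, hsum1, sub_div, div_self (by positivity)]
      simp only [h2]
      simpa using this

/-- main theorem; Watrous's conjecture: for every permutation-invariant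
partial function `f : [M]^N → {0,1,*}` whose domain contains both a 0-input and a 1-input,
`R(f) ≤ C · Q(f)⁹ · (2 + log(Q(f)+1))²¹`. -/
theorem randomized_vs_quantum_permutation_invariant :
    ∃ C : ℝ, 0 < C ∧
      ∀ (N M : ℕ), 0 < N → 0 < M →
        ∀ f : (Fin N → Fin M) → Option Bool,
          (∀ (X : Fin N → Fin M) (σ : Equiv.Perm (Fin N)) (τ : Equiv.Perm (Fin M)),
            f X = f fun i => τ (X (σ i))) →
          (∃ X, f X = some false) → (∃ X, f X = some true) →
          (Rc f : ℝ) ≤ C * (Qc f : ℝ) ^ 9 * (2 + Real.log ((Qc f : ℝ) + 1)) ^ 21 := by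
  refine ⟨3200 * 54 ^ 4, by norm_num, fun N M hN hM f hf ⟨X0, hX0⟩ ⟨X1, hX1⟩ => ?_⟩
  have : NeZero M := ⟨hM.ne'⟩
  have hmem : Qc f ∈ {T | ∃ W : ℕ, ∃ alg : QAlg N M W,
      (∀ X ∈ {X | f X = some true}, 2 / 3 ≤ alg.acc T X) ∧
      (∀ X ∈ {X | f X = some false}, alg.acc T X ≤ 1 / 3)} := by
    obtain ⟨T, W, A, h1, h0⟩ := exists_exact_qalg hN f
    exact Nat.sInf_mem ⟨T, W, A, h1, h0⟩
  obtain ⟨W, A, h1, h0⟩ := hmem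
  have hT : 1 ≤ Qc f := by
    refine Nat.one_le_iff_ne_zero.2 fun h => ?_
    have h1 := h1 X1 hX1
    have h0 := h0 X0 hX0
    rw [h] at h1 h0
    have : A.acc 0 X0 = A.acc 0 X1 := rfl
    linarith
  have hR := Rc_le_of_acc hT f (fun X σ => hf X σ 1) A h1 h0
  generalize Qc f = T at hT hR
  have hTR : (1 : ℝ) ≤ T := by exact_mod_cast hT
  have hlog : (0 : ℝ) ≤ Real.log ((T : ℝ) + 1) := Real.log_nonneg (by linarith)
  calc (Rc f : ℝ) ≤ 3200 * (54 * T) ^ 4 := by exact_mod_cast hR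
    _ = 3200 * 54 ^ 4 * (T : ℝ) ^ 4 := by ring
    _ ≤ 3200 * 54 ^ 4 * (T : ℝ) ^ 9 :=
      mul_le_mul_of_nonneg_left (pow_le_pow_right₀ hTR (by norm_num)) (by norm_num)
    _ ≤ 3200 * 54 ^ 4 * (T : ℝ) ^ 9 * (2 + Real.log ((T : ℝ) + 1)) ^ 21 :=
      le_mul_of_one_le_right (by positivity) (one_le_pow₀ (by linarith))
end

section
/- There exist universal constants C and T₀ such that the following holds for every integer T ≥ T₀, every c ∈ (0,1], all positive integers N, M, and every X = (x_1,…,x_N) ∈ [M]^N. Let κ_j = #{i ∈ [N] : x_i = j} for each j ∈ [M], set U = ⌈24 T^{1+c} ln T⌉, sample indices i_1,…,i_U independently and uniformly at random from [N], let z_j be the number of t ∈ [U] with x_{i_t} = j, and let κ̃_j = (N/U)·z_j. Then the probability that there exists some j ∈ [M] with |κ̃_j − κ_j| > N/T + κ_j/T^c is at most C/T. -/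
open scoped BigOperators

/-!
Write `p = κ_j / N`, so that `z_j` is binomial with parameters `U, p`. The union bound runs over
possibly very many values `j`, so each failure probability has to be bounded by a multiple of `p`
itself; these bounds are then summed using `∑ j, κ_j = N`.

Both tails are handled by an exponential moment with the single parameter `l = T ^ (-c) ≤ 1`.
Since `exp (±l) - 1 ∓ l ≤ l ^ 2`, the term `κ_j / T ^ c` of the allowed error exactly absorbs the
quadratic term `U p l ^ 2`, and the term `N / T` leaves the factor `exp (-(U l / T)) ≤ T ^ (-24)`.

* Upper tail (`card_upper_tail_le`): Markov's inequality for `exp (l z) - 1` rather than `exp (l z)`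
  makes the bound proportional to `p`, because `exp y - 1 ≤ y exp y`.
* Lower tail (`card_lower_tail_le`): this event is empty unless `1 ≤ T p`, so a factor `T p` is free.
-/

/-- The number of sampled indices `s t` at which `X` takes the value `j`. -/
def hits {N M U : ℕ} (X : Fin N → Fin M) (j : Fin M) (s : Fin U → Fin N) : ℕ :=
  (Finset.univ.filter fun t => X (s t) = j).card

/-- The multiplicity of the value `j` in `X`. -/
def mult {N M : ℕ} (X : Fin N → Fin M) (j : Fin M) : ℕ :=
  (Finset.univ.filter fun i => X i = j).card

/-- The moment generating function of the binomial variable `hits`, multiplied by `N ^ U`. -/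
lemma sum_exp_hits {N M U : ℕ} (X : Fin N → Fin M) (j : Fin M) (m : ℝ) :
    ∑ s : Fin U → Fin N, Real.exp (m * hits X j s) =
      ((N : ℝ) + mult X j * (Real.exp m - 1)) ^ U := by
  have h1 : ∀ s : Fin U → Fin N, Real.exp (m * hits X j s) =
      ∏ t, (1 + (if X (s t) = j then Real.exp m - 1 else 0)) := by
    intro s
    have : ∀ t, (1 + (if X (s t) = j then Real.exp m - 1 else 0)) =
        if X (s t) = j then Real.exp m else 1 := by
      intro t; split_ifs <;> ring
    simp only [this]
    rw [Finset.prod_ite]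
    simp [hits, mul_comm m, Real.exp_nat_mul]
  simp only [h1]
  rw [← Fintype.sum_pow (fun i => 1 + (if X i = j then Real.exp m - 1 else 0))]
  congr 1
  rw [Finset.sum_add_distrib, ← Finset.sum_filter]
  simp [mult, mul_sub]

lemma sum_exp_hits_le {N M U : ℕ} (hN : 0 < N) (X : Fin N → Fin M) (j : Fin M) (m : ℝ) :
    ∑ s : Fin U → Fin N, Real.exp (m * hits X j s) ≤
      (N : ℝ) ^ U * Real.exp (U * ((mult X j : ℝ) / N) * (Real.exp m - 1)) := by
  have hN' : (0 : ℝ) < N := by exact_mod_cast hN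
  have hk : (mult X j : ℝ) ≤ N := by
    have : mult X j ≤ N := by
      simpa [mult] using Finset.card_filter_le (Finset.univ : Finset (Fin N)) (fun i => X i = j)
    exact_mod_cast this
  rw [sum_exp_hits]
  have h2 : (U : ℝ) * ((mult X j : ℝ) / N) * (Real.exp m - 1) =
      U * ((mult X j : ℝ) / N * (Real.exp m - 1)) := by ring
  rw [h2, Real.exp_nat_mul, ← mul_pow]
  apply pow_le_pow_left₀
  · have := mul_nonneg (Nat.cast_nonneg (α := ℝ) (mult X j)) (Real.exp_pos m).le
    nlinarith
  · have := Real.add_one_le_exp ((mult X j : ℝ) / N * (Real.exp m - 1))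
    calc (N : ℝ) + mult X j * (Real.exp m - 1)
        = N * ((mult X j : ℝ) / N * (Real.exp m - 1) + 1) := by field_simp; ring
      _ ≤ _ := by gcongr

/-- Markov's inequality for the counting measure on a finite type. -/
lemma card_le_sum_of_one_le {α : Type*} [Fintype α] (P : α → Prop) [DecidablePred P]
    (f : α → ℝ) (h0 : ∀ s, 0 ≤ f s) (h1 : ∀ s, P s → 1 ≤ f s) :
    ((Finset.univ.filter P).card : ℝ) ≤ ∑ s, f s := by
  rw [← Finset.sum_boole]
  apply Finset.sum_le_sum
  intro s _
  split_ifs with h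
  · exact h1 s h
  · exact h0 s

lemma exp_sub_one_sub_le {x : ℝ} (h : |x| ≤ 1) : Real.exp x - 1 ≤ x + x ^ 2 := by
  have := (abs_le.1 (Real.abs_exp_sub_one_sub_id_le h)).2
  linarith

open Classical in
/-- The threshold is at least `U / T`, so `hL` bounds `exp (l θ)` away from `1`; `p` appears as a
factor because `exp (l z) - 1` vanishes at `z = 0`. -/
lemma card_upper_tail_le {N M U : ℕ} (hN : 0 < N) (X : Fin N → Fin M) (j : Fin M)
    {T l : ℝ} (hl : 0 < l) (hl1 : l ≤ 1) (hL : 2 ≤ Real.exp (U * l / T)) :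
    ((Finset.univ.filter fun s : Fin U → Fin N =>
      U / T + U * ((mult X j : ℝ) / N) * l + U * ((mult X j : ℝ) / N) < hits X j s).card : ℝ) ≤
      (N : ℝ) ^ U * ((mult X j : ℝ) / N * (4 * U * Real.exp (-(U * l / T)))) := by
  set p : ℝ := (mult X j : ℝ) / N with hp
  have hp0 : 0 ≤ p := by positivity
  set θ : ℝ := U / T + U * p * l + U * p with hθ
  have hθL : U * l / T ≤ l * θ := by
    have : l * θ = U * l / T + l * (U * p * l + U * p) := by rw [hθ]; ring
    have h2 : 0 ≤ l * (U * p * l + U * p) := by positivity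
    linarith
  have hθ2 : 2 ≤ Real.exp (l * θ) := hL.trans (Real.exp_le_exp.2 hθL)
  have hE1 : Real.exp l - 1 ≤ l + l ^ 2 := exp_sub_one_sub_le (by rwa [abs_of_pos hl])
  have hE0 : 0 ≤ Real.exp l - 1 := by linarith [Real.add_one_le_exp l]
  -- As `exp (l * θ) ≥ 2`, one has `exp (l * θ) - 1 ≥ exp (l * θ) / 2`.
  have key := card_le_sum_of_one_le (fun s : Fin U → Fin N => θ < hits X j s)
    (fun s => 2 * Real.exp (-(l * θ)) * (Real.exp (l * hits X j s) - 1))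
    (fun s => by
      have : 0 ≤ l * (hits X j s : ℝ) := by positivity
      have := Real.add_one_le_exp (l * (hits X j s : ℝ))
      have h3 : 0 ≤ Real.exp (l * hits X j s) - 1 := by linarith
      positivity)
    (fun s hs => by
      have h1 : Real.exp (l * θ) ≤ Real.exp (l * hits X j s) := by
        apply Real.exp_le_exp.2; gcongr
      have h2 : Real.exp (l * θ) / 2 ≤ Real.exp (l * hits X j s) - 1 := by linarith
      calc (1 : ℝ) = 2 * Real.exp (-(l * θ)) * (Real.exp (l * θ) / 2) := by
            rw [Real.exp_neg]; field_simp
        _ ≤ _ := by gcongr)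
  refine key.trans ?_
  rw [← Finset.mul_sum, Finset.sum_sub_distrib]
  have hs := sum_exp_hits_le (U := U) hN X j l
  rw [← hp] at hs
  have hcard : ∑ _s : Fin U → Fin N, (1 : ℝ) = (N : ℝ) ^ U := by simp
  rw [hcard]
  set y : ℝ := U * p * (Real.exp l - 1) with hy
  have hy0 : 0 ≤ y := by positivity
  have hey : Real.exp y - 1 ≤ y * Real.exp y := by
    have h1 := Real.add_one_le_exp (-y)
    have h2 : Real.exp (-y) * Real.exp y = 1 := by rw [← Real.exp_add]; simp
    nlinarith [Real.exp_pos y]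
  have hUp : (0 : ℝ) ≤ U * p := by positivity
  have hyle : y ≤ U * p * 2 := by
    apply mul_le_mul_of_nonneg_left _ hUp
    nlinarith
  have hexp : Real.exp (-(l * θ)) * Real.exp y ≤ Real.exp (-(U * l / T)) := by
    rw [← Real.exp_add]
    apply Real.exp_le_exp.2
    have : y ≤ U * p * (l + l ^ 2) := mul_le_mul_of_nonneg_left hE1 hUp
    have h2 : l * θ = U * l / T + U * p * (l + l ^ 2) := by rw [hθ]; ring
    linarith
  calc 2 * Real.exp (-(l * θ)) * (∑ s : Fin U → Fin N, Real.exp (l * hits X j s) - (N : ℝ) ^ U)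
      ≤ 2 * Real.exp (-(l * θ)) * ((N : ℝ) ^ U * Real.exp y - (N : ℝ) ^ U) := by gcongr
    _ = 2 * Real.exp (-(l * θ)) * (N : ℝ) ^ U * (Real.exp y - 1) := by ring
    _ ≤ 2 * Real.exp (-(l * θ)) * (N : ℝ) ^ U * (y * Real.exp y) := by gcongr
    _ = (N : ℝ) ^ U * (2 * y * (Real.exp (-(l * θ)) * Real.exp y)) := by ring
    _ ≤ (N : ℝ) ^ U * (2 * (U * p * 2) * Real.exp (-(U * l / T))) := by gcongr
    _ = _ := by ring

open Classical in
/-- Nonnegativity of `hits` makes the event empty unless `U / T ≤ U p`, which yields the factor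
`T p`. -/
lemma card_lower_tail_le {N M U : ℕ} (hN : 0 < N) (X : Fin N → Fin M) (j : Fin M)
    {T l : ℝ} (hT : 0 < T) (hl : 0 < l) (hl1 : l ≤ 1) (hU : 0 < U) :
    ((Finset.univ.filter fun s : Fin U → Fin N =>
      (hits X j s : ℝ) <
        U * ((mult X j : ℝ) / N) - U / T - U * ((mult X j : ℝ) / N) * l).card : ℝ) ≤
      (N : ℝ) ^ U * ((mult X j : ℝ) / N * (T * Real.exp (-(U * l / T)))) := by
  set p : ℝ := (mult X j : ℝ) / N with hp
  have hp0 : 0 ≤ p := by positivity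
  have hU' : (0 : ℝ) < U := by exact_mod_cast hU
  set θ : ℝ := U * p - U / T - U * p * l with hθ
  have hE1 : Real.exp (-l) - 1 ≤ -l + (-l) ^ 2 :=
    exp_sub_one_sub_le (by rwa [abs_neg, abs_of_pos hl])
  have hUp : (0 : ℝ) ≤ U * p := by positivity
  have key := card_le_sum_of_one_le (fun s : Fin U → Fin N => (hits X j s : ℝ) < θ)
    (fun s => T * p * Real.exp (l * θ) * Real.exp (-l * hits X j s))
    (fun s => by positivity)
    (fun s hs => by
      have h0 : (0 : ℝ) ≤ hits X j s := by positivity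
      have hTp : 1 ≤ T * p := by
        have h1 : (U : ℝ) / T ≤ U * p := by
          have : 0 ≤ U * p * l := by positivity
          linarith
        rw [div_le_iff₀ hT] at h1
        nlinarith
      have h1 : 1 ≤ Real.exp (l * θ) * Real.exp (-l * hits X j s) := by
        rw [← Real.exp_add]
        apply Real.one_le_exp
        nlinarith
      rw [mul_assoc]
      exact one_le_mul_of_one_le_of_one_le hTp h1)
  refine key.trans ?_
  rw [← Finset.mul_sum]
  have hs := sum_exp_hits_le (U := U) hN X j (-l)
  rw [← hp] at hs
  have hexp : Real.exp (l * θ) * Real.exp (U * p * (Real.exp (-l) - 1)) ≤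
      Real.exp (-(U * l / T)) := by
    rw [← Real.exp_add]
    apply Real.exp_le_exp.2
    have := mul_le_mul_of_nonneg_left hE1 hUp
    have h2 : l * θ = -(U * l / T) - U * p * (-l + (-l) ^ 2) := by rw [hθ]; ring
    linarith
  calc T * p * Real.exp (l * θ) * ∑ s : Fin U → Fin N, Real.exp (-l * hits X j s)
      ≤ T * p * Real.exp (l * θ) *
        ((N : ℝ) ^ U * Real.exp (U * p * (Real.exp (-l) - 1))) := by gcongr
    _ = (N : ℝ) ^ U * (p * T *
        (Real.exp (l * θ) * Real.exp (U * p * (Real.exp (-l) - 1)))) := by ring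
    _ ≤ (N : ℝ) ^ U * (p * T * Real.exp (-(U * l / T))) := by gcongr
    _ = _ := by ring

lemma sum_mult {N M : ℕ} (X : Fin N → Fin M) : ∑ j, (mult X j : ℝ) = N := by
  have := Finset.card_eq_sum_card_fiberwise (f := X) (s := Finset.univ) (t := Finset.univ)
    (fun _ _ => by simp)
  simp only [Finset.card_univ, Fintype.card_fin] at this
  conv_rhs => rw [this]
  push_cast
  rfl

open Classical in
/-- The union bound over all values `j`. -/
lemma card_bad_le {N M U : ℕ} (hN : 0 < N) (X : Fin N → Fin M) {T l : ℝ} (hT : 0 < T)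
    (hl : 0 < l) (hl1 : l ≤ 1) (hU : 0 < U) (hL : 2 ≤ Real.exp (U * l / T)) :
    ((Finset.univ.filter fun s : Fin U → Fin N => ∃ j : Fin M,
      (N : ℝ) / T + (mult X j : ℝ) * l <
        |(N : ℝ) / U * (hits X j s : ℝ) - (mult X j : ℝ)|).card : ℝ) ≤
      (N : ℝ) ^ U * ((4 * U + T) * Real.exp (-(U * l / T))) := by
  have hN' : (0 : ℝ) < N := by exact_mod_cast hN
  have hU' : (0 : ℝ) < U := by exact_mod_cast hU
  set A : Fin M → Finset (Fin U → Fin N) := fun j => Finset.univ.filter fun s =>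
    U / T + U * ((mult X j : ℝ) / N) * l + U * ((mult X j : ℝ) / N) < hits X j s with hA
  set B : Fin M → Finset (Fin U → Fin N) := fun j => Finset.univ.filter fun s =>
    (hits X j s : ℝ) <
        U * ((mult X j : ℝ) / N) - U / T - U * ((mult X j : ℝ) / N) * l with hB
  have hsub : (Finset.univ.filter fun s : Fin U → Fin N => ∃ j : Fin M,
      (N : ℝ) / T + (mult X j : ℝ) * l <
        |(N : ℝ) / U * (hits X j s : ℝ) - (mult X j : ℝ)|) ⊆
      Finset.univ.biUnion fun j => A j ∪ B j := by
    intro s hs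
    obtain ⟨j, hj⟩ := (Finset.mem_filter.1 hs).2
    simp only [Finset.mem_biUnion, Finset.mem_univ, true_and, Finset.mem_union, hA, hB,
      Finset.mem_filter]
    refine ⟨j, ?_⟩
    have hc : (0 : ℝ) < U / N := by positivity
    have e1 : (U : ℝ) / N * (N / T + mult X j * l) = U / T + U * ((mult X j : ℝ) / N) * l := by
      field_simp
    have e2 : (U : ℝ) / N * (N / U * hits X j s - mult X j) =
        hits X j s - U * ((mult X j : ℝ) / N) := by
      field_simp
    rcases lt_abs.1 hj with h | h
    · left
      have := mul_lt_mul_of_pos_left h hc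
      rw [e1, e2] at this
      linarith
    · right
      have := mul_lt_mul_of_pos_left h hc
      rw [e1, mul_neg, e2] at this
      linarith
  have h1 : ((Finset.univ.biUnion fun j => A j ∪ B j).card : ℝ) ≤
      ∑ j, (((A j).card : ℝ) + (B j).card) := by
    have : (Finset.univ.biUnion fun j => A j ∪ B j).card ≤ ∑ j, ((A j).card + (B j).card) :=
      Finset.card_biUnion_le.trans (Finset.sum_le_sum fun j _ => Finset.card_union_le _ _)
    exact_mod_cast this
  calc _ ≤ ((Finset.univ.biUnion fun j => A j ∪ B j).card : ℝ) := by
        exact_mod_cast Finset.card_le_card hsub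
    _ ≤ _ := h1
    _ ≤ ∑ j, (mult X j : ℝ) *
        ((N : ℝ) ^ U / N * ((4 * U + T) * Real.exp (-(U * l / T)))) := by
        apply Finset.sum_le_sum
        intro j _
        have a := card_upper_tail_le hN X j hl hl1 hL
        have b := card_lower_tail_le hN X j hT hl hl1 hU
        refine (add_le_add a b).trans (le_of_eq ?_)
        ring
    _ = _ := by
        rw [← Finset.sum_mul, sum_mult]
        field_simp

/-- the sampling procedure `S_T` estimates every multiplicity `κ_j` to
within `N/T + κ_j/T^c`, except with probability `O(1/T)`. Here `U = ⌈24 T^{1+c} ln T⌉`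
indices are sampled independently and uniformly with replacement from `[N]`, and the
probability is a counting ratio over all `N^U` tuples of sampled indices. -/
theorem multiplicity_sampling_lemma :
    ∃ C T₀ : ℝ, 0 < C ∧
      ∀ (T : ℕ), T₀ ≤ T →
        ∀ (c : ℝ), 0 < c → c ≤ 1 →
          ∀ (N M : ℕ), 0 < N → 0 < M →
            ∀ X : Fin N → Fin M,
              let κ : Fin M → ℕ := fun j => (Finset.univ.filter fun i => X i = j).card
              let U : ℕ := ⌈24 * (T : ℝ) ^ ((1 : ℝ) + c) * Real.log T⌉₊
              (Nat.card {s : Fin U → Fin N //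
                  ∃ j : Fin M,
                    (N : ℝ) / T + (κ j : ℝ) / (T : ℝ) ^ c <
                      |(N : ℝ) / U * ((Finset.univ.filter fun t => X (s t) = j).card : ℝ)
                        - (κ j : ℝ)|} : ℝ)
                / (N : ℝ) ^ U ≤ C / T := by
  -- With `U ≤ 25 T ^ 3` the prefactor `4 U + T` is at most `101 T ^ 3`; `T ≥ 2` ensures `U > 0`.
  refine ⟨101, 2, by norm_num, ?_⟩
  intro T hT c hc hc1 N M hN hM X κ U
  classical
  have hT0 : (0 : ℝ) < T := by linarith
  have hT1 : (1 : ℝ) ≤ T := by linarith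
  have hlog : 0 < Real.log T := Real.log_pos (by linarith)
  have hTc : 0 < (T : ℝ) ^ c := Real.rpow_pos_of_pos hT0 c
  have hTc1 : 1 ≤ (T : ℝ) ^ c := Real.one_le_rpow hT1 hc.le
  have hpow : (T : ℝ) ^ ((1 : ℝ) + c) = T * (T : ℝ) ^ c := by
    rw [Real.rpow_add hT0, Real.rpow_one]
  have hUlow : 24 * (T : ℝ) ^ ((1 : ℝ) + c) * Real.log T ≤ U := Nat.le_ceil _
  have hUup : (U : ℝ) < 24 * (T : ℝ) ^ ((1 : ℝ) + c) * Real.log T + 1 :=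
    Nat.ceil_lt_add_one (by positivity)
  have hUpos : 0 < U := Nat.ceil_pos.2 (by positivity)
  rw [hpow] at hUlow hUup
  have hTcT : (T : ℝ) ^ c ≤ T := by
    simpa using Real.rpow_le_rpow_of_exponent_le hT1 hc1
  have hlogT : Real.log T ≤ T := (Real.log_le_sub_one_of_pos hT0).trans (by linarith)
  have hU25 : (U : ℝ) ≤ 25 * T ^ 3 := by
    have h1 : 24 * ((T : ℝ) * (T : ℝ) ^ c) * Real.log T ≤ 24 * (T * T) * T := by gcongr
    have h2 : (1 : ℝ) ≤ T ^ 3 := one_le_pow₀ hT1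
    nlinarith
  have hLlow : 24 * Real.log T ≤ U * ((T : ℝ) ^ c)⁻¹ / T := by
    rw [le_div_iff₀ hT0, ← div_eq_mul_inv, le_div_iff₀ hTc]
    linarith
  have hexp24 : Real.exp (24 * Real.log T) = (T : ℝ) ^ 24 := by
    have := Real.exp_nat_mul (Real.log T) 24
    rw [Real.exp_log hT0] at this
    exact_mod_cast this
  have hL : 2 ≤ Real.exp (U * ((T : ℝ) ^ c)⁻¹ / T) := by
    refine le_trans ?_ (Real.exp_le_exp.2 hLlow)
    rw [hexp24]
    exact hT.trans (le_self_pow₀ hT1 (by norm_num))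
  have main := card_bad_le hN X hT0 (inv_pos.2 hTc) (inv_le_one_of_one_le₀ hTc1) hUpos hL
  have hNU : (0 : ℝ) < (N : ℝ) ^ U := by positivity
  have hfin : (4 * U + T) * Real.exp (-(U * ((T : ℝ) ^ c)⁻¹ / T)) ≤ 101 / T := by
    have h1 : Real.exp (-(U * ((T : ℝ) ^ c)⁻¹ / T)) ≤ ((T : ℝ) ^ 24)⁻¹ := by
      rw [← hexp24, ← Real.exp_neg]
      exact Real.exp_le_exp.2 (by linarith)
    have h2 : (4 * U + T : ℝ) ≤ 101 * T ^ 3 := by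
      have : (T : ℝ) ≤ T ^ 3 := le_self_pow₀ hT1 (by norm_num)
      linarith
    calc _ ≤ (101 * (T : ℝ) ^ 3) * ((T : ℝ) ^ 24)⁻¹ := by gcongr
      _ ≤ (101 * (T : ℝ) ^ 3) * ((T : ℝ) ^ 4)⁻¹ := by gcongr <;> norm_num
      _ = 101 / T := by field_simp
  rw [div_le_iff₀ hNU, Nat.card_eq_fintype_card, Fintype.card_subtype]
  calc _ ≤ (N : ℝ) ^ U * ((4 * U + T) * Real.exp (-(U * ((T : ℝ) ^ c)⁻¹ / T))) := by
        simp only [div_eq_mul_inv _ ((T : ℝ) ^ c)]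
        convert main <;> rfl
    _ ≤ (N : ℝ) ^ U * (101 / T) := by gcongr
    _ = _ := mul_comm _ _
end

section
/- Suppose a T-query quantum algorithm on Boolean inputs X ∈ {0,1}^N has acceptance probability p(X). Then the total influence satisfies SumInf[p] ≤ 4T, where SumInf[p] = Σ_{i=1}^N E_{X uniform on {0,1}^N} |p(X) − p(X^i)| and X^i denotes X with its i-th bit flipped. -/
/-!
Write `X^i` for `X` with bit `i` flipped, `P_i` for the projection onto query index `i`, `p` for the
acceptance probability, and let `s_i(X)` be the sign of `p(X) - p(X^i)`, so that
`s_i(X^i) = -s_i(X)`. For `a = Π ψ_X` and `b = Π ψ_{X^i}`,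
`‖a‖² - ‖b‖² = 2 Re⟪a, a - b⟫ - ‖a - b‖²`.
Multiplied by `s_i(X)` and averaged over `X`, the last term vanishes, because `‖a - b‖²` is
invariant under `X ↦ X^i` while `s_i` changes sign. By Cauchy–Schwarz, the total influence is
therefore at most `2 E_X ‖D_T(X)‖`, where `D_t(X) = ∑ i, s_i(X) (ψ_t(X) - ψ_t(X^i))`
(`sum_abs_acc_sub_le`).

Since `O_{X^i} = O_X (1 - 2 P_i)`, the vectors `D_t` satisfy
`D_{t+1} = U_{t+1} O_X (D_t + 2 R_t)` with `R_t(X) = ∑ i, s_i(X) P_i ψ_t(X^i)`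
(`signedDiff_succ`). The summands of `R_t` are orthogonal, so
`E ‖R_t‖² ≤ ∑ i, E ‖P_i ψ_t(X^i)‖² = ∑ i, E ‖P_i ψ_t(X)‖² = 1` (`sum_norm_queryPart_sq_le`), and
hence `E ‖D_T‖ ≤ 2 T` (`sum_norm_signedDiff_le`).
-/

open scoped BigOperators

/-- The phase oracle for a Boolean input `X ∈ {0,1}^N`: the diagonal unitary with
`O_X (e_i ⊗ e_w) = (-1)^{x_i} e_i ⊗ e_w`. -/
noncomputable def phaseOracle {N W : ℕ} (X : Fin N → Bool) :
    Matrix (Fin N × Fin W) (Fin N × Fin W) ℂ :=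
  Matrix.diagonal fun p => if X p.1 then -1 else 1

/-- A quantum query algorithm on Boolean inputs `X ∈ {0,1}^N`, with workspace dimension `W`:
an initial unit vector, unitaries `U 0, U 1, …`, and an orthogonal projection. -/
structure BAlg (N W : ℕ) : Type where
  init : (Fin N × Fin W) → ℂ
  init_norm : ∑ p, Complex.normSq (init p) = 1
  U : ℕ → Matrix (Fin N × Fin W) (Fin N × Fin W) ℂ
  U_unitary : ∀ t, U t ∈ Matrix.unitaryGroup (Fin N × Fin W) ℂ
  proj : Matrix (Fin N × Fin W) (Fin N × Fin W) ℂ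
  proj_herm : proj.IsHermitian
  proj_idem : proj * proj = proj

/-- The state after `t` queries: `ψ = U_t O_X U_{t-1} O_X ⋯ O_X U_0 ψ₀`. -/
noncomputable def BAlg.state {N W : ℕ} (A : BAlg N W) (X : Fin N → Bool) :
    ℕ → (Fin N × Fin W) → ℂ
  | 0 => (A.U 0).mulVec A.init
  | t + 1 => (A.U (t + 1)).mulVec ((phaseOracle X).mulVec (A.state X t))

/-- The acceptance probability of a `T`-query run on input `X`: `‖Π ψ_X‖²`. -/
noncomputable def BAlg.acc {N W : ℕ} (A : BAlg N W) (T : ℕ) (X : Fin N → Bool) : ℝ :=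
  ∑ p, Complex.normSq (A.proj.mulVec (A.state X T) p)

/-- The Euclidean norm of a plain coordinate vector. -/
noncomputable def vnorm {ι : Type*} [Fintype ι] (v : ι → ℂ) : ℝ := ‖WithLp.toLp 2 v‖

section Norm

variable {ι : Type*} [Fintype ι]

lemma vnorm_nonneg (v : ι → ℂ) : 0 ≤ vnorm v := norm_nonneg _

lemma vnorm_sq (v : ι → ℂ) : vnorm v ^ 2 = ∑ p, Complex.normSq (v p) := by
  simp [vnorm, EuclideanSpace.norm_sq_eq, Complex.normSq_eq_norm_sq]

lemma vnorm_zero : vnorm (0 : ι → ℂ) = 0 := by simp [vnorm]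

lemma vnorm_add_two_smul_le (v w : ι → ℂ) :
    vnorm (v + (2 : ℂ) • w) ≤ vnorm v + 2 * vnorm w := by
  have h := norm_add_le (WithLp.toLp 2 v) ((2 : ℂ) • WithLp.toLp 2 w)
  rw [norm_smul] at h
  simpa [vnorm] using h

lemma inner_mulVec [DecidableEq ι] (M : Matrix ι ι ℂ) (v w : ι → ℂ) :
    inner ℂ (WithLp.toLp 2 v) (WithLp.toLp 2 (M.mulVec w)) =
      inner ℂ (WithLp.toLp 2 (M.conjTranspose.mulVec v)) (WithLp.toLp 2 w) := by
  rw [EuclideanSpace.inner_toLp_toLp, EuclideanSpace.inner_toLp_toLp, Matrix.star_mulVec,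
    Matrix.conjTranspose_conjTranspose, dotProduct_comm, dotProduct_comm w,
    Matrix.dotProduct_mulVec]

lemma vnorm_mulVec_unitary [DecidableEq ι] {M : Matrix ι ι ℂ}
    (hM : M ∈ Matrix.unitaryGroup ι ℂ) (v : ι → ℂ) : vnorm (M.mulVec v) = vnorm v := by
  have h : vnorm (M.mulVec v) ^ 2 = vnorm v ^ 2 := by
    have h1 : M.conjTranspose * M = 1 := Matrix.mem_unitaryGroup_iff'.1 hM
    rw [vnorm, vnorm, ← inner_self_eq_norm_sq (𝕜 := ℂ), ← inner_self_eq_norm_sq (𝕜 := ℂ),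
      inner_mulVec, Matrix.mulVec_mulVec, h1, Matrix.one_mulVec]
  exact (pow_left_inj₀ (vnorm_nonneg _) (vnorm_nonneg _) two_ne_zero).1 h

lemma inner_proj_mulVec [DecidableEq ι] {P : Matrix ι ι ℂ} (hP : P.IsHermitian)
    (hPP : P * P = P) (v w : ι → ℂ) :
    inner ℂ (WithLp.toLp 2 (P.mulVec v)) (WithLp.toLp 2 (P.mulVec w)) =
      inner ℂ (WithLp.toLp 2 (P.mulVec v)) (WithLp.toLp 2 w) := by
  rw [inner_mulVec, hP.eq, Matrix.mulVec_mulVec, hPP]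

lemma vnorm_proj_mulVec_le [DecidableEq ι] {P : Matrix ι ι ℂ} (hP : P.IsHermitian)
    (hPP : P * P = P) (v : ι → ℂ) : vnorm (P.mulVec v) ≤ vnorm v := by
  have h : vnorm (P.mulVec v) ^ 2 ≤ vnorm (P.mulVec v) * vnorm v := by
    rw [vnorm, ← inner_self_eq_norm_sq (𝕜 := ℂ), inner_proj_mulVec hP hPP]
    exact re_inner_le_norm _ _
  nlinarith [vnorm_nonneg (P.mulVec v), vnorm_nonneg v]

/-- The polarization identity `‖a‖² - ‖b‖² = 2 Re⟪a, a - b⟫ - ‖a - b‖²` for the projected vectors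
`a = P v`, `b = P w`. -/
lemma vnorm_proj_sq_sub [DecidableEq ι] {P : Matrix ι ι ℂ} (hP : P.IsHermitian)
    (hPP : P * P = P) (v w : ι → ℂ) :
    vnorm (P.mulVec v) ^ 2 - vnorm (P.mulVec w) ^ 2 =
      2 * (inner ℂ (WithLp.toLp 2 (P.mulVec v)) (WithLp.toLp 2 (v - w))).re
        - vnorm (P.mulVec (v - w)) ^ 2 := by
  rw [← inner_proj_mulVec hP hPP, Matrix.mulVec_sub]
  have h := norm_sub_sq (𝕜 := ℂ) (WithLp.toLp 2 (P.mulVec v)) (WithLp.toLp 2 (P.mulVec w))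
  have h2 := inner_self_eq_norm_sq (𝕜 := ℂ) (WithLp.toLp 2 (P.mulVec v))
  simp only [vnorm, WithLp.toLp_sub, inner_sub_right, Complex.sub_re]
  simp only [RCLike.re_eq_complex_re] at h h2
  rw [h, h2]
  ring

end Norm

/-- The input `X` with its `i`-th bit flipped. -/
def flipBit {N : ℕ} (i : Fin N) (X : Fin N → Bool) : Fin N → Bool :=
  Function.update X i (!X i)

lemma flipBit_flipBit {N : ℕ} (i : Fin N) (X : Fin N → Bool) :
    flipBit i (flipBit i X) = X := by
  simp [flipBit]

lemma sum_flipBit {N : ℕ} (i : Fin N) (f : (Fin N → Bool) → ℝ) :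
    ∑ X, f (flipBit i X) = ∑ X, f X :=
  Equiv.sum_comp (Function.Involutive.toPerm (flipBit i) (flipBit_flipBit i)) f

lemma phaseOracle_mem_unitaryGroup {N W : ℕ} (X : Fin N → Bool) :
    phaseOracle (W := W) X ∈ Matrix.unitaryGroup (Fin N × Fin W) ℂ := by
  rw [Matrix.mem_unitaryGroup_iff', phaseOracle, Matrix.star_eq_conjTranspose,
    Matrix.diagonal_conjTranspose, Matrix.diagonal_mul_diagonal, ← Matrix.diagonal_one]
  congr 1
  funext p
  cases h : X p.1 <;> simp [h]

namespace BAlg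

variable {N W : ℕ} (A : BAlg N W)

lemma vnorm_state (X : Fin N → Bool) (t : ℕ) : vnorm (A.state X t) = 1 := by
  induction t with
  | zero =>
    rw [state, vnorm_mulVec_unitary (A.U_unitary 0)]
    have h := vnorm_sq A.init
    rw [A.init_norm] at h
    nlinarith [vnorm_nonneg A.init]
  | succ t ih =>
    rw [state, vnorm_mulVec_unitary (A.U_unitary _),
      vnorm_mulVec_unitary (phaseOracle_mem_unitaryGroup X), ih]

/-- The vector `D_t(X) = ∑ i, s_i(X) (ψ_t(X) - ψ_t(X^i))`. -/
noncomputable def signedDiff (s : Fin N → (Fin N → Bool) → ℝ) (t : ℕ) (X : Fin N → Bool) :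
    Fin N × Fin W → ℂ :=
  ∑ i, (s i X : ℂ) • (A.state X t - A.state (flipBit i X) t)

/-- The vector `R_t(X) = ∑ i, s_i(X) P_i ψ_t(X^i)`, where `P_i` projects onto the vectors
supported on query index `i`. -/
noncomputable def queryPart (s : Fin N → (Fin N → Bool) → ℝ) (t : ℕ) (X : Fin N → Bool) :
    Fin N × Fin W → ℂ :=
  fun p => (s p.1 X : ℂ) * A.state (flipBit p.1 X) t p

lemma signedDiff_zero (s : Fin N → (Fin N → Bool) → ℝ) (X : Fin N → Bool) :
    A.signedDiff s 0 X = 0 := by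
  simp [signedDiff, state]

lemma signedDiff_succ (s : Fin N → (Fin N → Bool) → ℝ) (t : ℕ) (X : Fin N → Bool) :
    A.signedDiff s (t + 1) X = (A.U (t + 1)).mulVec ((phaseOracle X).mulVec
      (A.signedDiff s t X + (2 : ℂ) • A.queryPart s t X)) := by
  have key : ∑ i, (s i X : ℂ) • ((phaseOracle X).mulVec (A.state X t) -
      (phaseOracle (flipBit i X)).mulVec (A.state (flipBit i X) t)) =
      (phaseOracle X).mulVec (A.signedDiff s t X + (2 : ℂ) • A.queryPart s t X) := by
    funext p
    have hq : 2 * A.queryPart s t X p =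
        ∑ i, if i = p.1 then 2 * ((s i X : ℂ) * A.state (flipBit i X) t p) else 0 := by
      simp [queryPart]
    simp only [phaseOracle, Matrix.mulVec_diagonal, signedDiff, Pi.add_apply, Pi.smul_apply,
      Finset.sum_apply, Pi.sub_apply, smul_eq_mul]
    rw [hq, ← Finset.sum_add_distrib, Finset.mul_sum]
    refine Finset.sum_congr rfl fun i _ => ?_
    by_cases h : i = p.1
    · subst h
      cases hX : X p.1 <;> simp [flipBit, hX] <;> ring
    · have h' : flipBit i X p.1 = X p.1 := by
        simp [flipBit, Function.update_of_ne (Ne.symm h)]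
      rw [h', if_neg h]
      ring
  rw [← key, Matrix.mulVec_sum]
  simp only [signedDiff, state, Matrix.mulVec_smul, Matrix.mulVec_sub]

lemma sum_norm_queryPart_sq_le (s : Fin N → (Fin N → Bool) → ℝ) (hs : ∀ i X, |s i X| ≤ 1)
    (t : ℕ) : ∑ X, vnorm (A.queryPart s t X) ^ 2 ≤ 2 ^ N := by
  calc ∑ X, vnorm (A.queryPart s t X) ^ 2
      ≤ ∑ X, ∑ p : Fin N × Fin W, Complex.normSq (A.state (flipBit p.1 X) t p) := by
        refine Finset.sum_le_sum fun X _ => ?_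
        rw [vnorm_sq]
        refine Finset.sum_le_sum fun p _ => ?_
        rw [queryPart, Complex.normSq_mul, Complex.normSq_ofReal]
        refine mul_le_of_le_one_left (Complex.normSq_nonneg _) ?_
        rw [← abs_mul_abs_self]
        exact mul_le_one₀ (hs _ _) (abs_nonneg _) (hs _ _)
    _ = ∑ X, vnorm (A.state X t) ^ 2 := by
        simp only [vnorm_sq]
        rw [Finset.sum_comm, Finset.sum_comm (s := (Finset.univ : Finset (Fin N → Bool)))]
        exact Finset.sum_congr rfl fun p _ =>
          sum_flipBit p.1 fun X => Complex.normSq (A.state X t p)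
    _ = 2 ^ N := by simp [vnorm_state]

lemma sum_norm_signedDiff_le (s : Fin N → (Fin N → Bool) → ℝ) (hs : ∀ i X, |s i X| ≤ 1)
    (t : ℕ) : ∑ X, vnorm (A.signedDiff s t X) ≤ 2 * t * 2 ^ N := by
  induction t with
  | zero => simp [signedDiff_zero, vnorm_zero]
  | succ t ih =>
    -- `2 r ≤ 1 + r²` replaces Jensen's inequality for the average of `‖R_t‖`.
    have hstep : ∀ X, vnorm (A.signedDiff s (t + 1) X) ≤
        vnorm (A.signedDiff s t X) + (1 + vnorm (A.queryPart s t X) ^ 2) := by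
      intro X
      rw [signedDiff_succ, vnorm_mulVec_unitary (A.U_unitary _),
        vnorm_mulVec_unitary (phaseOracle_mem_unitaryGroup X)]
      have h := vnorm_add_two_smul_le (A.signedDiff s t X) (A.queryPart s t X)
      nlinarith [sq_nonneg (vnorm (A.queryPart s t X) - 1)]
    have hsum := Finset.sum_le_sum fun X (_ : X ∈ Finset.univ) => hstep X
    rw [Finset.sum_add_distrib, Finset.sum_add_distrib] at hsum
    have hone : ∑ _X : Fin N → Bool, (1 : ℝ) = 2 ^ N := by simp
    have hR := A.sum_norm_queryPart_sq_le s hs t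
    push_cast
    linarith

/-- The unnormalized total influence is at most `2 ∑ X, ‖D_T(X)‖`, where `D_T` is formed with the
signs of the differences `p(X) - p(X^i)`. -/
lemma sum_abs_acc_sub_le (T : ℕ) (s : Fin N → (Fin N → Bool) → ℝ)
    (hs : ∀ i X, |A.acc T X - A.acc T (flipBit i X)| =
      s i X * (A.acc T X - A.acc T (flipBit i X)))
    (hanti : ∀ i X, s i (flipBit i X) = -s i X) :
    ∑ i, ∑ X, |A.acc T X - A.acc T (flipBit i X)| ≤ 2 * ∑ X, vnorm (A.signedDiff s T X) := by
  have hacc : ∀ X, A.acc T X = vnorm (A.proj.mulVec (A.state X T)) ^ 2 := fun X => by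
    rw [vnorm_sq, acc]
  have hvanish : ∀ i, ∑ X, s i X *
      vnorm (A.proj.mulVec (A.state X T - A.state (flipBit i X) T)) ^ 2 = 0 := by
    intro i
    have h := sum_flipBit i fun X => s i X *
      vnorm (A.proj.mulVec (A.state X T - A.state (flipBit i X) T)) ^ 2
    have hsymm : ∀ X, vnorm (A.proj.mulVec (A.state (flipBit i X) T - A.state X T)) =
        vnorm (A.proj.mulVec (A.state X T - A.state (flipBit i X) T)) := by
      intro X
      rw [Matrix.mulVec_sub, Matrix.mulVec_sub, vnorm, vnorm, WithLp.toLp_sub, WithLp.toLp_sub,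
        norm_sub_rev]
    simp only [flipBit_flipBit, hanti, hsymm, neg_mul, Finset.sum_neg_distrib] at h
    linarith
  have hinner : ∀ X, ∑ i, s i X * (inner ℂ (WithLp.toLp 2 (A.proj.mulVec (A.state X T)))
        (WithLp.toLp 2 (A.state X T - A.state (flipBit i X) T))).re =
      (inner ℂ (WithLp.toLp 2 (A.proj.mulVec (A.state X T)))
        (WithLp.toLp 2 (A.signedDiff s T X))).re := by
    intro X
    simp only [signedDiff, WithLp.toLp_sum, WithLp.toLp_smul, inner_sum, inner_smul_right,
      Complex.re_sum, Complex.re_ofReal_mul]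
  have hcs : ∀ X, (inner ℂ (WithLp.toLp 2 (A.proj.mulVec (A.state X T)))
      (WithLp.toLp 2 (A.signedDiff s T X))).re ≤ vnorm (A.signedDiff s T X) := by
    intro X
    have h1 : vnorm (A.proj.mulVec (A.state X T)) ≤ 1 :=
      (vnorm_proj_mulVec_le A.proj_herm A.proj_idem _).trans_eq (A.vnorm_state X T)
    exact (re_inner_le_norm (𝕜 := ℂ) _ _).trans
      (mul_le_of_le_one_left (vnorm_nonneg (A.signedDiff s T X)) h1)
  calc ∑ i, ∑ X, |A.acc T X - A.acc T (flipBit i X)|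
      = ∑ i, ∑ X, 2 * (s i X * (inner ℂ (WithLp.toLp 2 (A.proj.mulVec (A.state X T)))
          (WithLp.toLp 2 (A.state X T - A.state (flipBit i X) T))).re) := by
        refine Finset.sum_congr rfl fun i _ => ?_
        rw [← sub_zero (∑ X, 2 * _), ← hvanish i, ← Finset.sum_sub_distrib]
        refine Finset.sum_congr rfl fun X _ => ?_
        rw [hs, hacc, hacc, vnorm_proj_sq_sub A.proj_herm A.proj_idem]
        ring
    _ = 2 * ∑ X, (inner ℂ (WithLp.toLp 2 (A.proj.mulVec (A.state X T)))
          (WithLp.toLp 2 (A.signedDiff s T X))).re := by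
        rw [Finset.sum_comm, Finset.mul_sum]
        refine Finset.sum_congr rfl fun X _ => ?_
        rw [← Finset.mul_sum, hinner]
    _ ≤ 2 * ∑ X, vnorm (A.signedDiff s T X) := by
        gcongr with X
        exact hcs X

end BAlg

/-- if a `T`-query quantum algorithm on Boolean inputs `X ∈ {0,1}^N` has
acceptance probability `p(X)`, then the total influence satisfies `SumInf[p] ≤ 4T`, where
`SumInf[p] = Σ_i E_X |p(X) − p(X^i)|`. -/
theorem quantum_total_influence_bound (N W T : ℕ) (A : BAlg N W) :
    ∑ i : Fin N,
      (∑ X : Fin N → Bool,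
          |A.acc T X - A.acc T (Function.update X i (!X i))|) / 2 ^ N
      ≤ 4 * T := by
  let s : Fin N → (Fin N → Bool) → ℝ := fun i X =>
    (SignType.sign (A.acc T X - A.acc T (flipBit i X)) : ℝ)
  have hs1 : ∀ i X, |s i X| ≤ 1 := by
    intro i X
    simp only [s]
    cases SignType.sign (A.acc T X - A.acc T (flipBit i X)) <;> simp
  have hanti : ∀ i X, s i (flipBit i X) = -s i X := by
    intro i X
    simp only [s, flipBit_flipBit]
    rw [← neg_sub (A.acc T X), Left.sign_neg]
    simp
  have h1 := A.sum_abs_acc_sub_le T s (fun i X => (sign_mul_self _).symm) hanti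
  have h2 := A.sum_norm_signedDiff_le s hs1 T
  rw [← Finset.sum_div, div_le_iff₀ (by positivity)]
  change ∑ i, ∑ X, |A.acc T X - A.acc T (flipBit i X)| ≤ _
  linarith
end

section
/- Suppose a T-query quantum algorithm on Boolean inputs X ∈ {0,1}^N has acceptance probability p(X). Then there exists a real multilinear polynomial q in N variables, of total degree at most 2T, such that q(X) = p(X) for every X ∈ {0,1}^N. -/
/-!
The proof is the polynomial method. Let `lowDeg N d` be the real span, among functions
`{0,1}^N → ℝ`, of the products `∏ i ∈ S, x_i` with `|S| ≤ d`. Since `x_i² = x_i` on the cube, the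
product of the functions of `S` and `S'` is that of `S ∪ S'`, so
`lowDeg N a * lowDeg N b ≤ lowDeg N (a + b)`. The unitaries act by constant linear maps and keep the
degree of the amplitudes, while an oracle call multiplies an amplitude by `1` or `-1`, i.e. by
`1 - 2 x_i`, raising the degree by at most one. Hence the real and imaginary parts of every amplitude
after `T` queries lie in `lowDeg N T`, and the acceptance probability, a sum of their squares after
a constant projection, lies in `lowDeg N (2 * T)`. Every member of `lowDeg N d` is the restriction
of a multilinear polynomial of degree at most `d`, because each spanning function is.
-/

open scoped BigOperators

/-- The `i`-th bit, as a real-valued function on the Boolean cube. -/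
noncomputable def bitFn {N : ℕ} (i : Fin N) : (Fin N → Bool) → ℝ :=
  fun X => if X i then 1 else 0

/-- The functions on the Boolean cube of degree at most `d`: the span of the products of at most
`d` distinct bits. -/
noncomputable def lowDeg (N d : ℕ) : Submodule ℝ ((Fin N → Bool) → ℝ) :=
  Submodule.span ℝ ((fun S : Finset (Fin N) => ∏ i ∈ S, bitFn i) '' {S | S.card ≤ d})

lemma prod_bitFn_mem {N d : ℕ} (S : Finset (Fin N)) (h : S.card ≤ d) :
    ∏ i ∈ S, bitFn i ∈ lowDeg N d :=
  Submodule.subset_span ⟨S, h, rfl⟩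

lemma prod_bitFn_apply {N : ℕ} (S : Finset (Fin N)) (X : Fin N → Bool) :
    (∏ i ∈ S, bitFn i) X = if ∀ i ∈ S, X i then 1 else 0 := by
  simp [Finset.prod_apply, bitFn, Finset.prod_ite_zero]

/-- Idempotence of the bits, in the form needed for products of monomials. -/
lemma prod_bitFn_mul {N : ℕ} (S S' : Finset (Fin N)) :
    (∏ i ∈ S, bitFn i) * ∏ i ∈ S', bitFn i = ∏ i ∈ S ∪ S', bitFn i := by
  funext X
  rw [Pi.mul_apply, prod_bitFn_apply, prod_bitFn_apply, prod_bitFn_apply]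
  simp only [Finset.mem_union, or_imp, forall_and, ite_and, mul_ite, mul_one, mul_zero]
  split_ifs <;> rfl

lemma mul_mem_lowDeg {N a b : ℕ} {f g : (Fin N → Bool) → ℝ}
    (hf : f ∈ lowDeg N a) (hg : g ∈ lowDeg N b) : f * g ∈ lowDeg N (a + b) := by
  have h : lowDeg N a * lowDeg N b ≤ lowDeg N (a + b) := by
    rw [lowDeg, lowDeg, Submodule.span_mul_span, Submodule.span_le]
    rintro _ ⟨_, ⟨S, hS, rfl⟩, _, ⟨S', hS', rfl⟩, rfl⟩
    simp only [prod_bitFn_mul]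
    exact prod_bitFn_mem _ ((Finset.card_union_le _ _).trans (add_le_add hS hS'))
  exact h (Submodule.mul_mem_mul hf hg)

lemma const_mem_lowDeg {N d : ℕ} (c : ℝ) : (fun _ => c) ∈ lowDeg N d := by
  have h := (lowDeg N d).smul_mem c (prod_bitFn_mem (d := d) (∅ : Finset (Fin N)) (by simp))
  convert h using 1
  funext X
  simp

/-- The eigenvalue `(-1)^{x_i}` of the oracle is the degree-one function `1 - 2 x_i`. -/
lemma sign_mem_lowDeg {N : ℕ} (i : Fin N) :
    (fun X : Fin N → Bool => if X i then (-1 : ℝ) else 1) ∈ lowDeg N 1 := by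
  have hb : bitFn i ∈ lowDeg N 1 := by
    simpa using prod_bitFn_mem (d := 1) ({i} : Finset (Fin N)) (by simp)
  convert (lowDeg N 1).sub_mem (const_mem_lowDeg 1) ((lowDeg N 1).smul_mem 2 hb) using 1
  funext X
  by_cases h : X i <;> simp [bitFn, h]
  norm_num

/-- A complex-valued function on the cube has degree at most `d` if its real and imaginary parts
do. -/
def CLow {N : ℕ} (d : ℕ) (f : (Fin N → Bool) → ℂ) : Prop :=
  (fun X => (f X).re) ∈ lowDeg N d ∧ (fun X => (f X).im) ∈ lowDeg N d

lemma CLow.mulVec {N d : ℕ} {ι : Type*} [Fintype ι] (M : Matrix ι ι ℂ)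
    {v : (Fin N → Bool) → ι → ℂ} (hv : ∀ p, CLow d fun X => v X p) (p : ι) :
    CLow d fun X => M.mulVec (v X) p := by
  constructor
  · have h := (lowDeg N d).sum_mem (t := Finset.univ) fun q _ =>
      (lowDeg N d).sub_mem ((lowDeg N d).smul_mem (M p q).re (hv q).1)
        ((lowDeg N d).smul_mem (M p q).im (hv q).2)
    convert h using 1
    funext X
    simp [Matrix.mulVec, dotProduct, Finset.sum_apply]
  · have h := (lowDeg N d).sum_mem (t := Finset.univ) fun q _ =>
      (lowDeg N d).add_mem ((lowDeg N d).smul_mem (M p q).re (hv q).2)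
        ((lowDeg N d).smul_mem (M p q).im (hv q).1)
    convert h using 1
    funext X
    simp [Matrix.mulVec, dotProduct, Finset.sum_apply]

lemma CLow.phaseOracle {N W d : ℕ} {v : (Fin N → Bool) → Fin N × Fin W → ℂ}
    (hv : ∀ p, CLow d fun X => v X p) (p : Fin N × Fin W) :
    CLow (d + 1) fun X => (phaseOracle X).mulVec (v X) p := by
  constructor
  · convert mul_mem_lowDeg (hv p).1 (sign_mem_lowDeg p.1) using 1
    funext X
    by_cases h : X p.1 <;> simp [_root_.phaseOracle, Matrix.mulVec_diagonal, h]
  · convert mul_mem_lowDeg (hv p).2 (sign_mem_lowDeg p.1) using 1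
    funext X
    by_cases h : X p.1 <;> simp [_root_.phaseOracle, Matrix.mulVec_diagonal, h]

lemma BAlg.state_cLow {N W : ℕ} (A : BAlg N W) (t : ℕ) :
    ∀ p, CLow t fun X => A.state X t p := by
  induction t with
  | zero => exact fun p =>
    ⟨const_mem_lowDeg (A.state (fun _ => false) 0 p).re,
      const_mem_lowDeg (A.state (fun _ => false) 0 p).im⟩
  | succ t ih => exact CLow.mulVec (A.U (t + 1)) (CLow.phaseOracle ih)

lemma BAlg.acc_mem_lowDeg {N W : ℕ} (A : BAlg N W) (T : ℕ) : A.acc T ∈ lowDeg N (2 * T) := by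
  have hv := CLow.mulVec A.proj (A.state_cLow T)
  have h := (lowDeg N (T + T)).sum_mem (t := Finset.univ) fun p _ =>
    (lowDeg N (T + T)).add_mem (mul_mem_lowDeg (hv p).1 (hv p).1)
      (mul_mem_lowDeg (hv p).2 (hv p).2)
  rw [two_mul]
  convert h using 1
  funext X
  simp [BAlg.acc, Complex.normSq_apply, Finset.sum_apply]

lemma exists_polynomial_of_mem_lowDeg {N d : ℕ} {f : (Fin N → Bool) → ℝ} (hf : f ∈ lowDeg N d) :
    ∃ q : MvPolynomial (Fin N) ℝ,
      q.totalDegree ≤ d ∧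
      (∀ m ∈ q.support, ∀ i : Fin N, m i ≤ 1) ∧
      ∀ X : Fin N → Bool, MvPolynomial.eval (fun i => if X i then (1 : ℝ) else 0) q = f X := by
  let P := MvPolynomial.restrictTotalDegree (Fin N) ℝ d ⊓ MvPolynomial.restrictDegree (Fin N) ℝ 1
  have hle : lowDeg N d ≤ P.map (MvPolynomial.aeval bitFn).toLinearMap := by
    rw [lowDeg, Submodule.span_le]
    rintro _ ⟨S, hS, rfl⟩
    have hmon : (∏ i ∈ S, MvPolynomial.X i : MvPolynomial (Fin N) ℝ)
        = MvPolynomial.monomial (∑ i ∈ S, Finsupp.single i 1) 1 := by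
      simp [MvPolynomial.monomial_sum_one, MvPolynomial.X]
    refine ⟨∏ i ∈ S, MvPolynomial.X i, ⟨?_, ?_⟩, by simp [map_prod]⟩
    · rw [SetLike.mem_coe, MvPolynomial.mem_restrictTotalDegree]
      refine (MvPolynomial.totalDegree_finsetProd _ _).trans ?_
      simpa using hS
    · rw [SetLike.mem_coe, MvPolynomial.mem_restrictDegree, hmon]
      intro m hm i
      have hm' := Finset.mem_singleton.1 (MvPolynomial.support_monomial_subset hm)
      subst hm'
      rw [Finsupp.finsetSum_apply]
      simp only [Finsupp.single_apply, Finset.sum_ite_eq']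
      split_ifs <;> simp
  obtain ⟨q, ⟨hq₁, hq₂⟩, rfl⟩ := hle hf
  refine ⟨q, (MvPolynomial.mem_restrictTotalDegree _ _ _).1 hq₁,
    (MvPolynomial.mem_restrictDegree _ _ _).1 hq₂, fun X => ?_⟩
  -- Evaluating at `X` after substituting the bit functions is an algebra homomorphism, fixed by
  -- its values on the variables.
  have h : MvPolynomial.aeval (fun i => if X i then (1 : ℝ) else 0)
      = (Pi.evalAlgHom ℝ (fun _ : Fin N → Bool => ℝ) X).comp (MvPolynomial.aeval bitFn) := by
    ext i
    simp [bitFn]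
  simpa [MvPolynomial.aeval_eq_eval] using DFunLike.congr_fun h q

/-- the acceptance probability of a `T`-query quantum algorithm on Boolean
inputs is given, on `{0,1}^N`, by a real multilinear polynomial of total degree at most `2T`. -/
theorem quantum_acceptance_is_low_degree_polynomial (N W T : ℕ) (A : BAlg N W) :
    ∃ q : MvPolynomial (Fin N) ℝ,
      q.totalDegree ≤ 2 * T ∧
      (∀ m ∈ q.support, ∀ i : Fin N, m i ≤ 1) ∧
      ∀ X : Fin N → Bool,
        MvPolynomial.eval (fun i => if X i then (1 : ℝ) else 0) q = A.acc T X := by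
  exact exists_polynomial_of_mem_lowDeg (A.acc_mem_lowDeg T)
end
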